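/- Fix a pattern ω = (ω₁,…,ω_m). For each n ≥ 1, let L_n denote the finite nonempty set of Łukasiewicz paths of length n, equipped with the uniform probability measure, and let X_n(p) be the number of occurrences of ω in the path p ∈ L_n. Then there exist real constants μ > 0 and v > 0 such that E[X_n]/n → μ and Var[X_n]/n → v as n → ∞, and X_n converges after standardization to a standard Gaussian: for every x ∈ ℝ, the proportion of paths p ∈ L_n with X_n(p) ≤ μn + x·√(v·n) tends to (2π)^{−1/2} ∫_{−∞}^{x} e^{−t²/2} dt as n → ∞. -/

import Mathlib

/-!
Write a step `s` of a path as one letter `true` followed by `1 - s` letters `false`. A path of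
length `n` then becomes a word of `2 * n + 1` letters, `n + 1` of them `true`, with positive
heights. By the cycle lemma each cyclic word with `n + 1` letters `true` has exactly one such
rotation, so the average over paths of a rotation-invariant statistic is its average over the
middle slice of the cube of all words. Up to a bounded boundary error, the occurrences of a pattern
are the occurrences of a fixed factor in the cyclic word, a sum of local terms.

On the whole cube, Tikhomirov's method gives a central limit theorem for such sums: the
characteristic function `φ` of a locally dependent sum of variance `V` satisfies
`φ' l ≈ -V * l * φ l`. A function on the cube with `M` coordinates changes its average on passing
to the middle slice by `O(1 / √M)` times its average total increment along the upward edges of the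
cube. Subtracting a multiple of the total spin, which is constant on the slice, makes the sum
uncorrelated with the spin, and then this error is negligible. The variance is positive since
otherwise the centred sum would vanish identically, which is refuted by the word without `true`,
the words with a single `true`, and a word containing the factor, which has at least two.
-/

noncomputable section

open Filter MeasureTheory

/-- `s : ℕ → ℤ` is the step sequence of a Łukasiewicz path of length `n`: each of the first
`n` steps is at most `1`, every partial sum `y_i = s 0 + ⋯ + s (i-1)` with `1 ≤ i ≤ n` is
strictly positive, and (for canonicity) `s` vanishes from index `n` on. -/
def IsLukaSteps (n : ℕ) (s : ℕ → ℤ) : Prop :=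
  (∀ i, n ≤ i → s i = 0) ∧ (∀ i < n, s i ≤ 1) ∧
    ∀ i : ℕ, 1 ≤ i → i ≤ n → 0 < ∑ j ∈ Finset.range i, s j

/-- `ω : ℕ → ℤ` (restricted to indices `< m`) is a pattern: each step is at most `1` and
every partial sum is strictly positive. -/
def IsPattern (m : ℕ) (ω : ℕ → ℤ) : Prop :=
  (∀ j < m, ω j ≤ 1) ∧ ∀ i : ℕ, 1 ≤ i → i ≤ m → 0 < ∑ j ∈ Finset.range i, ω j

/-- The number of occurrences of the pattern `ω` (of length `m`) in the Łukasiewicz path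
with step sequence `s` (of length `n`). -/
def occCount (m : ℕ) (ω : ℕ → ℤ) (n : ℕ) (s : ℕ → ℤ) : ℕ :=
  Nat.card {k : ℕ // k + m ≤ n ∧ ∀ j < m, s (k + j) = ω j}

/-- The mean number of occurrences of `ω` over all Łukasiewicz paths of length `n`. -/
def lukaMean (m : ℕ) (ω : ℕ → ℤ) (n : ℕ) : ℝ :=
  (∑' p : {s : ℕ → ℤ // IsLukaSteps n s}, (occCount m ω n p.1 : ℝ)) /
    (Nat.card {s : ℕ → ℤ // IsLukaSteps n s} : ℝ)

/-- The mean square of the number of occurrences of `ω` over all Łukasiewicz paths of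
length `n`. -/
def lukaSqMean (m : ℕ) (ω : ℕ → ℤ) (n : ℕ) : ℝ :=
  (∑' p : {s : ℕ → ℤ // IsLukaSteps n s}, (occCount m ω n p.1 : ℝ) ^ 2) /
    (Nat.card {s : ℕ → ℤ // IsLukaSteps n s} : ℝ)

open scoped BigOperators

open Complex (I)

/-! ### Functions on a finite cube -/

section Cube

variable {ι α : Type*} [Fintype ι] [DecidableEq ι] [Fintype α] [Nonempty α]

lemma expect_mul_of_dependsOn {𝕜 : Type*} [Field 𝕜] [CharZero 𝕜] {F G : (ι → α) → 𝕜}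
    {A : Finset ι} (hF : DependsOn F (A : Set ι)) (hG : DependsOn G (A : Set ι)ᶜ) :
    𝔼 b, F b * G b = (𝔼 b, F b) * 𝔼 b, G b := by
  -- Exchanging the coordinates in `A` of two independent copies preserves the product measure.
  let swap : (ι → α) × (ι → α) → (ι → α) × (ι → α) :=
    fun q ↦ (A.piecewise q.1 q.2, A.piecewise q.2 q.1)
  have swap_invol : Function.Involutive swap := by
    rintro ⟨a, b⟩
    ext i <;> by_cases hi : i ∈ A <;> simp [swap, Finset.piecewise, hi]
  have hFG (q : (ι → α) × (ι → α)) : F q.1 * G q.2 = F (swap q).1 * G (swap q).1 := by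
    congr 1
    · exact hF fun i hi ↦ (A.piecewise_eq_of_mem _ _ hi).symm
    · exact hG fun i hi ↦ (A.piecewise_eq_of_notMem _ _ hi).symm
  calc 𝔼 b, F b * G b
      = 𝔼 q : (ι → α) × (ι → α), F q.1 * G q.1 := by
        rw [← Finset.univ_product_univ, Finset.expect_product]; simp
    _ = 𝔼 q : (ι → α) × (ι → α), F q.1 * G q.2 :=
        (Fintype.expect_equiv (swap_invol.toPerm swap) _ _ hFG).symm
    _ = (𝔼 b, F b) * 𝔼 b, G b := by
        rw [Fintype.expect_mul_expect, ← Finset.univ_product_univ, Finset.expect_product]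

end Cube

lemma dependsOn_sum {ι ν β : Type*} {π : ι → Type*} [AddCommMonoid β] {s : Finset ν}
    {F : ν → (∀ i, π i) → β} {A : Set ι} (h : ∀ k ∈ s, DependsOn (F k) A) :
    DependsOn (fun b ↦ ∑ k ∈ s, F k b) A :=
  fun _ _ hab ↦ Finset.sum_congr rfl fun k hk ↦ h k hk hab

lemma norm_exp_mul_I_sub_exp_mul_I_le (x y : ℝ) :
    ‖Complex.exp (x * I) - Complex.exp (y * I)‖ ≤ |x - y| := by
  have factor : Complex.exp (x * I) - Complex.exp (y * I)
      = Complex.exp (y * I) * (Complex.exp (I * (x - y : ℝ)) - 1) := by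
    rw [mul_sub, ← Complex.exp_add]
    push_cast
    ring_nf
  rw [factor, norm_mul, Complex.norm_exp_ofReal_mul_I, one_mul]
  exact Real.norm_exp_I_mul_ofReal_sub_one_le

lemma norm_exp_mul_I_sub_one_sub_le (x : ℝ) :
    ‖Complex.exp (x * I) - 1 - x * I‖ ≤ 2 * x ^ 2 := by
  obtain hx | hx := le_or_gt |x| 1
  · refine (Complex.norm_exp_sub_one_sub_id_le (by simpa using hx)).trans ?_
    simp only [norm_mul, Complex.norm_I, mul_one, Complex.norm_real, Real.norm_eq_abs, sq_abs]
    linarith [sq_nonneg x]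
  · have h := norm_exp_mul_I_sub_exp_mul_I_le x 0
    simp only [Complex.ofReal_zero, zero_mul, Complex.exp_zero, sub_zero] at h
    refine (norm_sub_le _ _).trans ?_
    simp only [norm_mul, Complex.norm_I, mul_one, Complex.norm_real, Real.norm_eq_abs]
    nlinarith [sq_abs x]

/-! ### Locally dependent sums -/

lemma norm_expect_le_of_forall_mem {α 𝕜 : Type*} [RCLike 𝕜] {s : Finset α} (hs : s.Nonempty)
    {F : α → 𝕜} {C : ℝ} (h : ∀ a ∈ s, ‖F a‖ ≤ C) : ‖𝔼 a ∈ s, F a‖ ≤ C :=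
  (RCLike.norm_expect_le (K := 𝕜)).trans (Finset.expect_le hs h)

/-- One summand of Tikhomirov's differential equation for the characteristic function. Here `X` is
the summand, `Z` the part of the sum correlated with `X`, and `W'` a part independent of
`(X, Z)`. -/
lemma expect_mul_exp_add_sub_eq {Ω : Type*} [Fintype Ω] {X Z W W' : Ω → ℝ}
    (hXW : 𝔼 a, (X a : ℂ) * Complex.exp (W a * I) = 0)
    (hXZ : 𝔼 a, ((X a * Z a : ℝ) : ℂ) * Complex.exp (W' a * I)
      = (𝔼 a, ((X a * Z a : ℝ) : ℂ)) * 𝔼 a, Complex.exp (W' a * I)) :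
    𝔼 a, (X a : ℂ) * Complex.exp ((Z a + W a : ℝ) * I)
      - (𝔼 a, ((X a * Z a : ℝ) : ℂ)) * I * 𝔼 a, Complex.exp ((Z a + W a : ℝ) * I)
      = 𝔼 a, (X a : ℂ) * (Complex.exp (W a * I) * (Complex.exp (Z a * I) - 1 - Z a * I))
        + I * 𝔼 a, ((X a * Z a : ℝ) : ℂ) * (Complex.exp (W a * I) - Complex.exp (W' a * I))
        + (𝔼 a, ((X a * Z a : ℝ) : ℂ)) * I
          * 𝔼 a, (Complex.exp (W' a * I) - Complex.exp ((Z a + W a : ℝ) * I)) := by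
  have expand (a) : (X a : ℂ) * (Complex.exp (W a * I) * (Complex.exp (Z a * I) - 1 - Z a * I))
      = X a * Complex.exp ((Z a + W a : ℝ) * I) - X a * Complex.exp (W a * I)
        - I * (((X a * Z a : ℝ) : ℂ) * Complex.exp (W a * I)) := by
    rw [Complex.ofReal_add, add_mul, Complex.exp_add]
    push_cast
    ring
  simp_rw [expand, mul_sub ((X _ * Z _ : ℝ) : ℂ), Finset.expect_sub_distrib, ← Finset.mul_expect,
    hXW, hXZ]
  ring

lemma norm_expect_mul_exp_add_sub_le {Ω : Type*} [Fintype Ω] [Nonempty Ω] {X Z W W' : Ω → ℝ}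
    {K Q : ℝ} (hX : ∀ a, |X a| ≤ K) (hZ : ∀ a, |Z a| ≤ Q) (hW : ∀ a, |W a - W' a| ≤ Q)
    (hW' : ∀ a, |Z a + W a - W' a| ≤ Q)
    (hXW : 𝔼 a, (X a : ℂ) * Complex.exp (W a * I) = 0)
    (hXZ : 𝔼 a, ((X a * Z a : ℝ) : ℂ) * Complex.exp (W' a * I)
      = (𝔼 a, ((X a * Z a : ℝ) : ℂ)) * 𝔼 a, Complex.exp (W' a * I)) :
    ‖𝔼 a, (X a : ℂ) * Complex.exp ((Z a + W a : ℝ) * I)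
      - (𝔼 a, ((X a * Z a : ℝ) : ℂ)) * I * 𝔼 a, Complex.exp ((Z a + W a : ℝ) * I)‖
      ≤ 4 * K * Q ^ 2 := by
  obtain ⟨a₀⟩ := ‹Nonempty Ω›
  have hK : 0 ≤ K := (abs_nonneg _).trans (hX a₀)
  have hQ : 0 ≤ Q := (abs_nonneg _).trans (hZ a₀)
  have hXZ_le (a) : ‖((X a * Z a : ℝ) : ℂ)‖ ≤ K * Q := by
    rw [Complex.norm_real, Real.norm_eq_abs, abs_mul]
    exact mul_le_mul (hX a) (hZ a) (abs_nonneg _) hK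
  have taylor_le : ‖𝔼 a, (X a : ℂ) * (Complex.exp (W a * I)
      * (Complex.exp (Z a * I) - 1 - Z a * I))‖ ≤ K * (2 * Q ^ 2) := by
    refine norm_expect_le_of_forall_mem Finset.univ_nonempty fun a _ ↦ ?_
    rw [norm_mul, norm_mul, Complex.norm_exp_ofReal_mul_I, one_mul, Complex.norm_real]
    refine mul_le_mul (hX a) ((norm_exp_mul_I_sub_one_sub_le _).trans ?_) (norm_nonneg _) hK
    gcongr 2 * ?_
    exact sq_le_sq' (neg_le_of_abs_le (hZ a)) (le_of_abs_le (hZ a))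
  have remove_le : ‖𝔼 a, ((X a * Z a : ℝ) : ℂ)
      * (Complex.exp (W a * I) - Complex.exp (W' a * I))‖ ≤ K * Q * Q := by
    refine norm_expect_le_of_forall_mem Finset.univ_nonempty fun a _ ↦ ?_
    rw [norm_mul]
    exact mul_le_mul (hXZ_le a) ((norm_exp_mul_I_sub_exp_mul_I_le _ _).trans (hW a))
      (norm_nonneg _) (by positivity)
  have restore_le : ‖𝔼 a, (Complex.exp (W' a * I) - Complex.exp ((Z a + W a : ℝ) * I))‖ ≤ Q := by
    refine norm_expect_le_of_forall_mem Finset.univ_nonempty fun a _ ↦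
      (norm_exp_mul_I_sub_exp_mul_I_le _ _).trans ?_
    rw [abs_sub_comm]
    exact hW' a
  rw [expect_mul_exp_add_sub_eq hXW hXZ]
  calc _ ≤ K * (2 * Q ^ 2) + K * Q * Q + K * Q * Q := by
        refine (norm_add₃_le).trans (add_le_add_three taylor_le ?_ ?_)
        · rwa [norm_mul, Complex.norm_I, one_mul]
        · rw [norm_mul, norm_mul, Complex.norm_I, mul_one]
          exact mul_le_mul (norm_expect_le_of_forall_mem Finset.univ_nonempty fun a _ ↦ hXZ_le a)
            restore_le (norm_nonneg _) (by positivity)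
    _ = 4 * K * Q ^ 2 := by ring

/-- The sites `y` whose set of coordinates `A y` meets `A x`. -/
def overlaps {ι : Type*} [Fintype ι] [DecidableEq ι] (A : ι → Finset ι) (x : ι) : Finset ι :=
  {y | ¬Disjoint (A x) (A y)}

/-- A family of bounded observables indexed by the coordinates of a cube, the one at `x` depending
on the coordinates in `A x` only, where each `A x` meets at most `d` of the others. -/
structure IsLocalFamily {ι α : Type*} [Fintype ι] [DecidableEq ι] (A : ι → Finset ι) (d : ℕ)
    (K : ℝ) (X : ι → (ι → α) → ℝ) : Prop where
  mem_self : ∀ x, x ∈ A x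
  card_overlaps_le : ∀ x, (overlaps A x).card ≤ d
  dependsOn : ∀ x, DependsOn (X x) (A x : Set ι)
  abs_le : ∀ x b, |X x b| ≤ K

section LocalFamily

variable {ι α : Type*} [Fintype ι] [DecidableEq ι] {A : ι → Finset ι} {d : ℕ} {K : ℝ}
  {X : ι → (ι → α) → ℝ}

lemma mem_overlaps {x y : ι} : y ∈ overlaps A x ↔ ¬Disjoint (A x) (A y) := by
  simp [overlaps]

lemma overlaps_biUnion_subset (x : ι) :
    overlaps (fun x ↦ (overlaps A x).biUnion A) x
      ⊆ ((overlaps A x).biUnion (overlaps A)).biUnion (overlaps A) := by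
  intro x' hx'
  simp only [mem_overlaps, Finset.disjoint_left, Finset.mem_biUnion, not_forall, not_not] at hx' ⊢
  obtain ⟨i, ⟨y, hxy, hiy⟩, y', ⟨j, hjx', hjy'⟩, hiy'⟩ := hx'
  exact ⟨y', ⟨y, hxy, i, hiy, hiy'⟩, j, hjy', hjx'⟩

namespace IsLocalFamily

variable (hX : IsLocalFamily A d K X)
include hX

lemma self_mem_overlaps (x : ι) : x ∈ overlaps A x :=
  mem_overlaps.2 (Finset.not_disjoint_iff.2 ⟨x, hX.mem_self x, hX.mem_self x⟩)

lemma dependsOn_compl {x y : ι} (hy : y ∉ overlaps A x) : DependsOn (X y) (A x : Set ι)ᶜ := by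
  rw [mem_overlaps, not_not] at hy
  exact fun _ _ hab ↦ hX.dependsOn y fun i hi ↦ hab i fun hi' ↦ Finset.disjoint_left.1 hy hi' hi

lemma card_biUnion_overlaps_le {s : Finset ι} : (s.biUnion (overlaps A)).card ≤ s.card * d :=
  Finset.card_biUnion_le_card_mul _ _ _ fun x _ ↦ hX.card_overlaps_le x

lemma card_overlaps_biUnion_le (x : ι) :
    (overlaps (fun x ↦ (overlaps A x).biUnion A) x).card ≤ d ^ 3 := by
  calc _ ≤ _ := Finset.card_le_card (overlaps_biUnion_subset x)
    _ ≤ (overlaps A x).card * d * d :=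
        hX.card_biUnion_overlaps_le.trans (Nat.mul_le_mul_right d hX.card_biUnion_overlaps_le)
    _ ≤ d ^ 3 := by
        have := hX.card_overlaps_le x
        rw [pow_succ, sq]
        gcongr

lemma abs_sum_le (s : Finset ι) (b : ι → α) : |∑ y ∈ s, X y b| ≤ s.card * K :=
  (s.abs_sum_le_sum_abs _).trans <|
    (Finset.sum_le_card_nsmul _ _ _ fun y _ ↦ hX.abs_le y b).trans_eq (nsmul_eq_mul _ _)

lemma dependsOn_biUnion {s : Finset ι} {y : ι} (hy : y ∈ s) :
    DependsOn (X y) (s.biUnion A : Set ι) := fun _ _ hab ↦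
  hX.dependsOn y fun i hi ↦ hab i (by simpa using ⟨y, hy, hi⟩)

lemma dependsOn_compl_biUnion {s : Finset ι} {y : ι}
    (hy : y ∉ s.biUnion (overlaps A)) : DependsOn (X y) (s.biUnion A : Set ι)ᶜ := by
  refine fun _ _ hab ↦ hX.dependsOn y fun i hi ↦ hab i fun hi' ↦ hy ?_
  obtain ⟨z, hz, hiz⟩ := Finset.mem_biUnion.1 hi'
  exact Finset.mem_biUnion.2 ⟨z, hz, mem_overlaps.2 (Finset.not_disjoint_iff.2 ⟨i, hiz, hi⟩)⟩

lemma abs_sum_le_of_subset {s : Finset ι} {x : ι}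
    (hs : s ⊆ (overlaps A x).biUnion (overlaps A)) (b : ι → α) :
    |∑ y ∈ s, X y b| ≤ d ^ 2 * K := by
  have hK : 0 ≤ K := (abs_nonneg _).trans (hX.abs_le x b)
  have card_le : s.card ≤ d * d := (Finset.card_le_card hs).trans <|
    hX.card_biUnion_overlaps_le.trans (Nat.mul_le_mul_right d (hX.card_overlaps_le x))
  refine (hX.abs_sum_le s b).trans (mul_le_mul_of_nonneg_right ?_ hK)
  exact_mod_cast card_le.trans_eq (sq d).symm

protected lemma smul (s : ℝ) : IsLocalFamily A d (|s| * K) fun x b ↦ s * X x b where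
  mem_self := hX.mem_self
  card_overlaps_le := hX.card_overlaps_le
  dependsOn x _ _ hab := by simp only [hX.dependsOn x hab]
  abs_le x b := by
    rw [abs_mul]
    exact mul_le_mul_of_nonneg_left (hX.abs_le x b) (abs_nonneg s)

variable [Fintype α] [Nonempty α]

lemma expect_mul_eq_zero {𝕜 : Type*} [RCLike 𝕜] {x : ι} (hx : 𝔼 b, X x b = 0)
    {G : (ι → α) → 𝕜} (hG : DependsOn G (A x : Set ι)ᶜ) : 𝔼 b, (X x b : 𝕜) * G b = 0 := by
  have hX' : DependsOn (fun b ↦ (X x b : 𝕜)) (A x : Set ι) := fun _ _ hab ↦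
    congrArg _ (hX.dependsOn x hab)
  rw [expect_mul_of_dependsOn hX' hG, ← algebraMap.coe_expect, hx]
  simp

lemma expect_mul_sum_eq {x : ι} (hx : 𝔼 b, X x b = 0) :
    𝔼 b, X x b * ∑ y, X y b = 𝔼 b, X x b * ∑ y ∈ overlaps A x, X y b := by
  have far_eq_zero : 𝔼 b, X x b * ∑ y ∈ (overlaps A x)ᶜ, X y b = 0 :=
    hX.expect_mul_eq_zero (𝕜 := ℝ) hx <| dependsOn_sum fun y hy ↦
      hX.dependsOn_compl (Finset.mem_compl.1 hy)
  simp_rw [← Finset.sum_add_sum_compl (overlaps A x), mul_add, Finset.expect_add_distrib,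
    far_eq_zero, add_zero]

lemma expect_sq_sum_eq (hX₀ : ∀ x, 𝔼 b, X x b = 0) :
    𝔼 b, (∑ x, X x b) ^ 2 = ∑ x, 𝔼 b, X x b * ∑ y ∈ overlaps A x, X y b := by
  simp_rw [sq, Finset.sum_mul, Finset.expect_sum_comm, hX.expect_mul_sum_eq (hX₀ _)]

lemma expect_sq_sum_le (hX₀ : ∀ x, 𝔼 b, X x b = 0) :
    𝔼 b, (∑ x, X x b) ^ 2 ≤ Fintype.card ι * (d * K ^ 2) := by
  rw [hX.expect_sq_sum_eq hX₀, ← nsmul_eq_mul]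
  refine Finset.sum_le_card_nsmul _ _ _ fun x _ ↦ Finset.expect_le Finset.univ_nonempty fun b _ ↦ ?_
  have hK : 0 ≤ K := (abs_nonneg _).trans (hX.abs_le x b)
  calc X x b * ∑ y ∈ overlaps A x, X y b
      ≤ |X x b| * |∑ y ∈ overlaps A x, X y b| := (le_abs_self _).trans (abs_mul _ _).le
    _ ≤ K * (d * K) := by
        gcongr
        · exact hX.abs_le x b
        · refine (hX.abs_sum_le _ b).trans ?_
          gcongr
          exact hX.card_overlaps_le x
    _ = d * K ^ 2 := by ring

lemma expect_sq_sum_sub_expect_le :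
    𝔼 b, (∑ x, X x b - 𝔼 c, ∑ x, X x c) ^ 2 ≤ Fintype.card ι * (d * (2 * K) ^ 2) := by
  have hX' : IsLocalFamily A d (2 * K) fun x b ↦ X x b - 𝔼 c, X x c :=
    { mem_self := hX.mem_self
      card_overlaps_le := hX.card_overlaps_le
      dependsOn := fun x _ _ hab ↦ by simp only [hX.dependsOn x hab]
      abs_le := fun x b ↦ by
        refine (abs_sub _ _).trans ?_
        have : |𝔼 c, X x c| ≤ K := (Finset.abs_expect_le _ _).trans
          (Finset.expect_le Finset.univ_nonempty fun c _ ↦ hX.abs_le x c)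
        linarith [hX.abs_le x b] }
  simpa only [Finset.sum_sub_distrib, Finset.expect_sum_comm] using
    hX'.expect_sq_sum_le fun x ↦ by simp [Finset.expect_sub_distrib]

end IsLocalFamily
end LocalFamily

section Tikhomirov

lemma hasDerivAt_expect_exp {Ω : Type*} [Fintype Ω] (Z : Ω → ℝ) (l : ℝ) :
    HasDerivAt (fun l : ℝ ↦ 𝔼 a, Complex.exp ((l * Z a : ℝ) * I))
      (I * 𝔼 a, (Z a : ℂ) * Complex.exp ((l * Z a : ℝ) * I)) l := by
  have hasDerivAt_term (a : Ω) : HasDerivAt (fun l : ℝ ↦ Complex.exp ((l * Z a : ℝ) * I))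
      (I * ((Z a : ℂ) * Complex.exp ((l * Z a : ℝ) * I))) l := by
    have h := (((hasDerivAt_id l).mul_const (Z a)).ofReal_comp.mul_const I).cexp
    refine h.congr_deriv ?_
    simp only [id, one_mul]
    ring
  simp_rw [Finset.mul_expect, Fintype.expect_eq_sum_div_card]
  exact (HasDerivAt.fun_sum fun a _ ↦ hasDerivAt_term a).div_const _

/-- Gronwall's argument for `φ' = -V l φ + O(ε)` with integrating factor `exp (V l² / 2)`. -/
lemma norm_sub_exp_le_of_norm_deriv_add_le {φ φ' : ℝ → ℂ} {V ε : ℝ} (hV : 0 ≤ V)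
    (hφ : ∀ l, HasDerivAt φ (φ' l) l) (hφ₀ : φ 0 = 1)
    (hφ' : ∀ l ∈ Set.Icc (0 : ℝ) 1, ‖φ' l + (l * V : ℝ) * φ l‖ ≤ ε) :
    ‖φ 1 - Real.exp (-V / 2)‖ ≤ ε := by
  let h (l : ℝ) : ℂ := Real.exp (V * l ^ 2 / 2) * φ l
  let h' (l : ℝ) : ℂ := Real.exp (V * l ^ 2 / 2) * (φ' l + (l * V : ℝ) * φ l)
  have hasDerivAt_h (l : ℝ) : HasDerivAt h (h' l) l := by
    have hexp := ((((hasDerivAt_pow 2 l).const_mul V).div_const 2).exp).ofReal_comp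
    refine (hexp.mul (hφ l)).congr_deriv ?_
    simp only [h']
    push_cast
    ring
  have norm_h'_le : ∀ l ∈ Set.Icc (0 : ℝ) 1, ‖h' l‖ ≤ Real.exp (V / 2) * ε := by
    intro l hl
    rw [norm_mul, Complex.norm_real, Real.norm_eq_abs, Real.abs_exp]
    have : V * l ^ 2 ≤ V * 1 := mul_le_mul_of_nonneg_left (pow_le_one₀ hl.1 hl.2) hV
    refine mul_le_mul ?_ (hφ' l hl) (norm_nonneg _) (Real.exp_nonneg _)
    gcongr
    linarith
  have norm_h_sub_le : ‖h 1 - h 0‖ ≤ Real.exp (V / 2) * ε := by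
    simpa using (convex_Icc (0 : ℝ) 1).norm_image_sub_le_of_norm_hasDerivWithin_le
      (fun l _ ↦ (hasDerivAt_h l).hasDerivWithinAt) norm_h'_le (Set.left_mem_Icc.2 zero_le_one)
        (Set.right_mem_Icc.2 zero_le_one)
  have exp_mul : φ 1 - Real.exp (-V / 2) = Real.exp (-V / 2) * (h 1 - h 0) := by
    have : (Real.exp (-V / 2) : ℂ) * Real.exp (V / 2) = 1 := by
      rw [← Complex.ofReal_mul, ← Real.exp_add]
      simp [neg_div]
    simp only [h, hφ₀]
    norm_num
    linear_combination (norm := (push_cast; ring_nf)) -φ 1 * this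
  rw [exp_mul, norm_mul, Complex.norm_real, Real.norm_eq_abs, Real.abs_exp]
  calc _ ≤ Real.exp (-V / 2) * (Real.exp (V / 2) * ε) := by gcongr
    _ = ε := by rw [← mul_assoc, ← Real.exp_add]; simp [neg_div]

variable {ι α : Type*} [Fintype ι] [DecidableEq ι] [Fintype α] [Nonempty α] {A : ι → Finset ι}
  {d : ℕ} {K : ℝ} {X : ι → (ι → α) → ℝ}

namespace IsLocalFamily

lemma expect_mul_exp_sum_compl_eq_zero (hX : IsLocalFamily A d K X) {x : ι} (hx : 𝔼 b, X x b = 0)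
    (l : ℝ) :
    𝔼 b, (X x b : ℂ) * Complex.exp ((l * ∑ y ∈ (overlaps A x)ᶜ, X y b : ℝ) * I) = 0 :=
  hX.expect_mul_eq_zero (𝕜 := ℂ) hx fun _ _ hab ↦
    congrArg (fun w : ℝ ↦ Complex.exp ((l * w : ℝ) * I)) <| dependsOn_sum
      (fun _ hy ↦ hX.dependsOn_compl (Finset.mem_compl.1 hy)) hab

lemma expect_mul_sum_mul_exp_eq (hX : IsLocalFamily A d K X) (x : ι) (l : ℝ) :
    𝔼 b, ((X x b * (l * ∑ y ∈ overlaps A x, X y b) : ℝ) : ℂ)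
        * Complex.exp ((l * ∑ y ∈ ((overlaps A x).biUnion (overlaps A))ᶜ, X y b : ℝ) * I)
      = (𝔼 b, ((X x b * (l * ∑ y ∈ overlaps A x, X y b) : ℝ) : ℂ))
        * 𝔼 b, Complex.exp ((l * ∑ y ∈ ((overlaps A x).biUnion (overlaps A))ᶜ, X y b : ℝ) * I) := by
  refine expect_mul_of_dependsOn (A := (overlaps A x).biUnion A) (fun _ _ hab ↦ ?_)
    fun _ _ hab ↦ congrArg (fun w : ℝ ↦ Complex.exp ((l * w : ℝ) * I)) <| dependsOn_sum
      (fun y hy ↦ hX.dependsOn_compl_biUnion (Finset.mem_compl.1 hy)) hab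
  simp only [hX.dependsOn_biUnion (hX.self_mem_overlaps x) hab,
    Finset.sum_congr rfl fun _ hy ↦ hX.dependsOn_biUnion hy hab]

lemma norm_expect_mul_exp_sub_le (hX : IsLocalFamily A d K X) {x : ι} (hx : 𝔼 b, X x b = 0)
    {l : ℝ} (hl : |l| ≤ 1) :
    ‖𝔼 b, (X x b : ℂ) * Complex.exp ((l * ∑ y, X y b : ℝ) * I)
      - ((l * 𝔼 b, X x b * ∑ y, X y b : ℝ) : ℂ) * I
        * (𝔼 b, Complex.exp ((l * ∑ y, X y b : ℝ) * I))‖ ≤ 4 * d ^ 4 * K ^ 3 := by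
  let N := overlaps A x
  let N' := N.biUnion (overlaps A)
  have hNN' : N ⊆ N' := fun y hy ↦ Finset.mem_biUnion.2 ⟨y, hy, hX.self_mem_overlaps y⟩
  have abs_le {s : Finset ι} (hs : s ⊆ N') (b : ι → α) : |l * ∑ y ∈ s, X y b| ≤ d ^ 2 * K := by
    rw [abs_mul]
    exact (mul_le_of_le_one_left (abs_nonneg _) hl).trans (hX.abs_sum_le_of_subset hs b)
  have split (s : Finset ι) (b : ι → α) :
      l * ∑ y, X y b = l * ∑ y ∈ s, X y b + l * ∑ y ∈ sᶜ, X y b := by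
    rw [← mul_add, Finset.sum_add_sum_compl]
  have abs_W_sub_le (b : ι → α) :
      |l * ∑ y ∈ Nᶜ, X y b - l * ∑ y ∈ N'ᶜ, X y b| ≤ d ^ 2 * K := by
    have : l * ∑ y ∈ Nᶜ, X y b - l * ∑ y ∈ N'ᶜ, X y b = l * ∑ y ∈ N' \ N, X y b := by
      rw [← mul_sub, ← Finset.sum_sdiff (Finset.compl_subset_compl.2 hNN'), add_sub_cancel_right,
        compl_sdiff_compl]
    rw [this]
    exact abs_le Finset.sdiff_subset b
  have abs_total_sub_le (b : ι → α) :
      |l * ∑ y ∈ N, X y b + l * ∑ y ∈ Nᶜ, X y b - l * ∑ y ∈ N'ᶜ, X y b| ≤ d ^ 2 * K := by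
    rw [← split N, split N', add_sub_cancel_right]
    exact abs_le subset_rfl b
  have bound := norm_expect_mul_exp_add_sub_le (hX.abs_le x) (abs_le hNN') abs_W_sub_le
    abs_total_sub_le (hX.expect_mul_exp_sum_compl_eq_zero hx l) (hX.expect_mul_sum_mul_exp_eq x l)
  simp only [← split, mul_left_comm (X x _) l] at bound
  have coe_expect : ((l * 𝔼 b, X x b * ∑ y, X y b : ℝ) : ℂ)
      = 𝔼 b, ((l * (X x b * ∑ y ∈ N, X y b) : ℝ) : ℂ) := by
    rw [hX.expect_mul_sum_eq hx, Finset.mul_expect]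
    exact map_expect Complex.ofRealHom _ _
  rw [coe_expect]
  exact bound.trans_eq (by ring)

theorem norm_expect_exp_sum_sub_le (hX : IsLocalFamily A d K X) (hX₀ : ∀ x, 𝔼 b, X x b = 0) :
    ‖𝔼 b, Complex.exp ((∑ x, X x b : ℝ) * I)
      - Real.exp (-(𝔼 b, (∑ x, X x b) ^ 2) / 2)‖ ≤ Fintype.card ι * (4 * d ^ 4 * K ^ 3) := by
  set Z : (ι → α) → ℝ := fun b ↦ ∑ x, X x b with hZ
  set φ : ℝ → ℂ := fun l ↦ 𝔼 b, Complex.exp ((l * Z b : ℝ) * I) with hφ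
  have sum_variance : 𝔼 b, Z b ^ 2 = ∑ x, 𝔼 b, X x b * Z b := by
    simp_rw [sq, hZ, Finset.sum_mul, Finset.expect_sum_comm]
  have sum_deriv (l : ℝ) : 𝔼 b, (Z b : ℂ) * Complex.exp ((l * Z b : ℝ) * I)
      = ∑ x, 𝔼 b, (X x b : ℂ) * Complex.exp ((l * Z b : ℝ) * I) := by
    rw [← Finset.expect_sum_comm]
    simp_rw [← Finset.sum_mul, hZ, Complex.ofReal_sum]
  have ode (l : ℝ) : I * 𝔼 b, (Z b : ℂ) * Complex.exp ((l * Z b : ℝ) * I)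
        + (l * 𝔼 b, Z b ^ 2 : ℝ) * φ l
      = I * ∑ x, (𝔼 b, (X x b : ℂ) * Complex.exp ((l * Z b : ℝ) * I)
          - ((l * 𝔼 b, X x b * Z b : ℝ) : ℂ) * I * φ l) := by
    rw [sum_variance, sum_deriv, Finset.sum_sub_distrib, ← Finset.sum_mul, ← Finset.sum_mul,
      ← Complex.ofReal_sum, ← Finset.mul_sum]
    linear_combination ((l * ∑ x, 𝔼 b, X x b * Z b : ℝ) : ℂ) * φ l * Complex.I_mul_I
  have ode_le : ∀ l ∈ Set.Icc (0 : ℝ) 1, ‖I * 𝔼 b, (Z b : ℂ) * Complex.exp ((l * Z b : ℝ) * I)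
      + (l * 𝔼 b, Z b ^ 2 : ℝ) * φ l‖ ≤ Fintype.card ι * (4 * d ^ 4 * K ^ 3) := by
    intro l hl
    rw [ode, norm_mul, Complex.norm_I, one_mul]
    refine (norm_sum_le_of_le _ fun x _ ↦ hX.norm_expect_mul_exp_sub_le (hX₀ x)
      (_root_.abs_le.2 ⟨by linarith [hl.1], hl.2⟩)).trans_eq ?_
    simp
  simpa only [hφ, one_mul] using norm_sub_exp_le_of_norm_deriv_add_le
    (Finset.expect_nonneg fun b _ ↦ sq_nonneg (Z b)) (hasDerivAt_expect_exp Z) (by simp) ode_le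

end IsLocalFamily
end Tikhomirov

/-! ### Slices of the Boolean cube -/

lemma choose_add_mul_choose_le {M c j : ℕ} (hcj : c ≤ j) (r : ℕ) :
    M.choose (j + r) * M.choose c ≤ M.choose j * M.choose (c + r) := by
  induction r with
  | zero => rfl
  | succ r ih =>
    refine Nat.le_of_mul_le_mul_right ?_ (j + r).succ_pos
    calc M.choose (j + r + 1) * M.choose c * (j + r + 1)
        = M.choose (j + r) * M.choose c * (M - (j + r)) := by
          rw [mul_right_comm, Nat.choose_succ_right_eq, mul_right_comm]
      _ ≤ M.choose j * M.choose (c + r) * (M - (c + r)) := by gcongr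
      _ = M.choose j * M.choose (c + r + 1) * (c + r + 1) := by
          rw [mul_assoc, ← Nat.choose_succ_right_eq, mul_assoc]
      _ ≤ M.choose j * M.choose (c + r + 1) * (j + r + 1) := by gcongr

lemma choose_sub_mul_choose_le {M c j r : ℕ} (hrj : r ≤ j) (hjc : j ≤ c) (hc : c ≤ M) :
    M.choose (j - r) * M.choose c ≤ M.choose j * M.choose (c - r) := by
  have h := choose_add_mul_choose_le (M := M) (Nat.sub_le_sub_left hjc M) r
  rw [← Nat.choose_symm hc, ← Nat.choose_symm (hjc.trans hc), ← Nat.choose_symm (by lia),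
    ← Nat.choose_symm (show c - r ≤ M by lia)]
  convert h using 3 <;> lia

lemma sum_choose_le_two_pow (M : ℕ) {s : Finset ℕ} {f : ℕ → ℕ} (hf : Set.InjOn f s) :
    ∑ k ∈ s, M.choose (f k) ≤ 2 ^ M := by
  rw [← Finset.sum_image (f := M.choose) hf, ← Nat.sum_range_choose]
  refine Finset.sum_le_sum_of_ne_zero fun k _ hk ↦ ?_
  rw [Finset.mem_range_succ_iff]
  exact Nat.choose_ne_zero_iff.1 hk

/-- A Mills-ratio bound: the binomial mass of the indices `k` separated from `c` by the edge
`{j, j + 1}` is controlled by the number `choose M j * (M - j)` of cube edges above level `j`. -/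
lemma sum_choose_between_le {M c j m : ℕ} (hc : c ≤ M) (hm : m ≤ c + 1) (hm' : m + c ≤ M + 1) :
    (∑ k ∈ Finset.range (M + 1) with j ∈ Finset.Ico (min k c) (max k c), M.choose k)
      * (M.choose c * m) ≤ 2 ^ M * (M.choose j * (M - j)) := by
  rw [← mul_assoc, Finset.sum_mul]
  obtain hcj | hjc := le_or_gt c j
  · calc _ ≤ (∑ k ∈ Finset.Icc (j + 1) M, M.choose k * M.choose c) * m := by
          refine Nat.mul_le_mul_right m (Finset.sum_le_sum_of_subset fun k hk ↦ ?_)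
          simp only [Finset.mem_filter, Finset.mem_range, Finset.mem_Ico, Finset.mem_Icc] at hk ⊢
          lia
      _ ≤ (∑ k ∈ Finset.Icc (j + 1) M, M.choose (j + 1) * M.choose (c + (k - (j + 1)))) * m := by
          refine Nat.mul_le_mul_right m (Finset.sum_le_sum fun k hk ↦ ?_)
          rw [Finset.mem_Icc] at hk
          simpa only [Nat.add_sub_cancel' hk.1] using
            choose_add_mul_choose_le (hcj.trans j.le_succ) (k - (j + 1))
      _ ≤ M.choose (j + 1) * 2 ^ M * (j + 1) := by
          rw [← Finset.mul_sum]
          gcongr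
          · refine sum_choose_le_two_pow M fun k hk k' hk' h ↦ ?_
            simp only [Finset.coe_Icc, Set.mem_Icc] at hk hk'
            lia
          · lia
      _ = 2 ^ M * (M.choose j * (M - j)) := by
          rw [mul_right_comm, Nat.choose_succ_right_eq, mul_comm]
  · calc _ ≤ (∑ k ∈ Finset.range (j + 1), M.choose k * M.choose c) * m := by
          refine Nat.mul_le_mul_right m (Finset.sum_le_sum_of_subset fun k hk ↦ ?_)
          simp only [Finset.mem_filter, Finset.mem_range, Finset.mem_Ico] at hk ⊢
          lia
      _ ≤ (∑ k ∈ Finset.range (j + 1), M.choose j * M.choose (c - (j - k))) * m := by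
          refine Nat.mul_le_mul_right m (Finset.sum_le_sum fun k hk ↦ ?_)
          simpa only [Nat.sub_sub_self (Finset.mem_range_succ_iff.1 hk)] using
            choose_sub_mul_choose_le (Nat.sub_le j k) hjc.le hc
      _ ≤ M.choose j * 2 ^ M * (M - j) := by
          rw [← Finset.mul_sum]
          gcongr
          · refine sum_choose_le_two_pow M fun k hk k' hk' h ↦ ?_
            simp only [Finset.coe_range, Set.mem_Iio] at hk hk'
            lia
          · lia
      _ = 2 ^ M * (M.choose j * (M - j)) := by ring

section Slice

variable {ι : Type*} [Fintype ι] [DecidableEq ι]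

/-- The words in the Boolean cube with exactly `k` letters `true`. -/
def slice (ι : Type*) [Fintype ι] [DecidableEq ι] (k : ℕ) : Finset (ι → Bool) :=
  {b | Finset.card {x | b x} = k}

/-- The total increment of `G` along the edges of the cube leading up from `b`. -/
def upGradient {E : Type*} [AddCommGroup E] (G : (ι → Bool) → E) (b : ι → Bool) : E :=
  ∑ x with b x = false, (G (Function.update b x true) - G b)

lemma mem_slice {k : ℕ} {b : ι → Bool} : b ∈ slice ι k ↔ Finset.card {x | b x} = k := by
  simp [slice]

lemma card_slice (k : ℕ) : (slice ι k).card = (Fintype.card ι).choose k := by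
  rw [← Finset.card_univ, ← Finset.card_powersetCard]
  refine Finset.card_nbij' (fun b ↦ ({x | b x} : Finset ι)) (fun s x ↦ decide (x ∈ s)) ?_ ?_ ?_ ?_
  all_goals simp [Set.MapsTo, Set.LeftInvOn, mem_slice]

lemma card_filter_update_true {b : ι → Bool} {x : ι} (hx : b x = false) :
    Finset.card {y | Function.update b x true y} = Finset.card {y | b y} + 1 := by
  rw [← Finset.card_insert_of_notMem (a := x) (s := {y | b y}) (by simp [hx])]
  congr 1
  ext y
  by_cases hy : y = x <;> simp [hy]

lemma sum_slice_succ {E : Type*} [AddCommMonoid E] (G : (ι → Bool) → E) (k : ℕ) :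
    (k + 1) • ∑ b ∈ slice ι (k + 1), G b
      = ∑ b ∈ slice ι k, ∑ x with b x = false, G (Function.update b x true) := by
  calc (k + 1) • ∑ b ∈ slice ι (k + 1), G b
      = ∑ b ∈ slice ι (k + 1), ∑ x with b x = true, G b := by
        rw [← Finset.sum_nsmul]
        refine Finset.sum_congr rfl fun b hb ↦ ?_
        rw [Finset.sum_const, mem_slice.1 hb]
    _ = ∑ x, ∑ b ∈ slice ι (k + 1) with b x = true, G b :=
        Finset.sum_comm' fun b x ↦ by simp
    _ = ∑ x, ∑ b ∈ slice ι k with b x = false, G (Function.update b x true) := by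
        refine Finset.sum_congr rfl fun x _ ↦ Finset.sum_nbij' (Function.update · x false)
          (Function.update · x true) ?_ ?_ ?_ ?_ ?_
        · intro b hb
          simp only [Finset.mem_filter, mem_slice] at hb ⊢
          have h := card_filter_update_true (b := Function.update b x false) (x := x) (by simp)
          rw [Function.update_idem, Function.update_eq_iff.2 ⟨hb.2.symm, fun _ _ ↦ rfl⟩, hb.1] at h
          exact ⟨by lia, by simp⟩
        · intro b hb
          simp only [Finset.mem_filter, mem_slice] at hb ⊢
          exact ⟨by rw [card_filter_update_true hb.2, hb.1], by simp⟩
        all_goals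
          intro b hb
          rw [Finset.mem_filter] at hb
          simp [← hb.2]
    _ = _ := (Finset.sum_comm' fun b x ↦ by simp).symm

variable {𝕜 : Type*} [RCLike 𝕜]

lemma sum_slice_upGradient (G : (ι → Bool) → 𝕜) (k : ℕ) :
    ∑ b ∈ slice ι k, upGradient G b
      = ((Fintype.card ι).choose k * (Fintype.card ι - k : ℕ) : ℕ)
        * (𝔼 b ∈ slice ι (k + 1), G b - 𝔼 b ∈ slice ι k, G b) := by
  have card_false {b : ι → Bool} (hb : b ∈ slice ι k) :
      Finset.card {x | b x = false} = Fintype.card ι - k := by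
    have h := Finset.card_filter_add_card_filter_not (s := .univ) (fun x ↦ b x = true)
    rw [mem_slice.1 hb, Finset.card_univ] at h
    simp only [Bool.not_eq_true] at h
    lia
  have card_edges : (Fintype.card ι).choose k * (Fintype.card ι - k)
      = (k + 1) * (slice ι (k + 1)).card := by
    rw [card_slice, mul_comm (k + 1), Nat.choose_succ_right_eq]
  calc ∑ b ∈ slice ι k, upGradient G b
      = (k + 1) • ∑ b ∈ slice ι (k + 1), G b
        - (Fintype.card ι - k : ℕ) * ∑ b ∈ slice ι k, G b := by
        rw [sum_slice_succ, Finset.mul_sum, ← Finset.sum_sub_distrib]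
        simp only [upGradient, Finset.sum_sub_distrib, Finset.sum_const, nsmul_eq_mul]
        congr 1
        exact Finset.sum_congr rfl fun b hb ↦ by rw [card_false hb]
    _ = ((k + 1) * (slice ι (k + 1)).card : ℕ) * (𝔼 b ∈ slice ι (k + 1), G b)
        - ((slice ι k).card * (Fintype.card ι - k) : ℕ) * (𝔼 b ∈ slice ι k, G b) := by
        rw [← Finset.card_mul_expect, ← Finset.card_mul_expect, nsmul_eq_mul]
        push_cast
        ring
    _ = _ := by rw [← card_edges, card_slice, mul_sub]

lemma choose_mul_dist_le_sum_slice (G : (ι → Bool) → 𝕜) (k : ℕ) :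
    ((Fintype.card ι).choose k * (Fintype.card ι - k) : ℕ)
        * dist (𝔼 b ∈ slice ι k, G b) (𝔼 b ∈ slice ι (k + 1), G b)
      ≤ ∑ b ∈ slice ι k, ‖upGradient G b‖ := by
  rw [dist_comm, dist_eq_norm, ← RCLike.norm_natCast (K := 𝕜), ← norm_mul, ← sum_slice_upGradient]
  exact norm_sum_le _ _

lemma sum_sum_slice {E : Type*} [AddCommMonoid E] (F : (ι → Bool) → E) :
    ∑ k ∈ Finset.range (Fintype.card ι + 1), ∑ b ∈ slice ι k, F b = ∑ b, F b := by
  refine (Finset.sum_congr rfl fun k _ ↦ ?_).trans (Finset.sum_fiberwise_of_maps_to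
    (g := fun b : ι → Bool ↦ Finset.card {x | b x}) (fun b _ ↦ ?_) F)
  · simp [slice]
  · exact Finset.mem_range_succ_iff.2 (Finset.card_le_univ _)

lemma two_pow_mul_expect_sub_expect_slice (G : (ι → Bool) → 𝕜) (c : ℕ) :
    2 ^ Fintype.card ι * (𝔼 b, G b - 𝔼 b ∈ slice ι c, G b)
      = ∑ k ∈ Finset.range (Fintype.card ι + 1),
        (Fintype.card ι).choose k * (𝔼 b ∈ slice ι k, G b - 𝔼 b ∈ slice ι c, G b) := by
  simp_rw [mul_sub, Finset.sum_sub_distrib, ← Finset.sum_mul, ← Nat.cast_sum,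
    Nat.sum_range_choose, ← card_slice, Finset.card_mul_expect, sum_sum_slice,
    ← Fintype.card_mul_expect]
  simp

lemma norm_sum_choose_mul_sub_le (a : ℕ → 𝕜) {M c : ℕ} (hc : c ≤ M) :
    ‖∑ k ∈ Finset.range (M + 1), (M.choose k : 𝕜) * (a k - a c)‖
      ≤ ∑ j ∈ Finset.range M, ((∑ k ∈ Finset.range (M + 1)
          with j ∈ Finset.Ico (min k c) (max k c), M.choose k : ℕ) : ℝ)
        * dist (a j) (a (j + 1)) := by
  have norm_sub_le (k : ℕ) :
      ‖a k - a c‖ ≤ ∑ j ∈ Finset.Ico (min k c) (max k c), dist (a j) (a (j + 1)) := by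
    rw [← dist_eq_norm]
    obtain hkc | hck := le_total k c
    · simpa [hkc] using dist_le_Ico_sum_dist a hkc
    · simpa [hck, dist_comm (a k)] using dist_le_Ico_sum_dist a hck
  calc ‖∑ k ∈ Finset.range (M + 1), (M.choose k : 𝕜) * (a k - a c)‖
      ≤ ∑ k ∈ Finset.range (M + 1),
          M.choose k * ∑ j ∈ Finset.Ico (min k c) (max k c), dist (a j) (a (j + 1)) := by
        refine norm_sum_le_of_le _ fun k _ ↦ ?_
        rw [norm_mul, RCLike.norm_natCast]
        exact mul_le_mul_of_nonneg_left (norm_sub_le k) (Nat.cast_nonneg _)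
    _ = _ := by
        simp_rw [Nat.cast_sum, Finset.mul_sum, Finset.sum_mul]
        refine Finset.sum_comm' fun k j ↦ ?_
        simp only [Finset.mem_range, Finset.mem_Ico, Finset.mem_filter]
        lia

/-- Along the edges of the cube, the average over a slice is linked to the averages over all the
other slices by telescoping. -/
theorem norm_expect_sub_expect_slice_le (G : (ι → Bool) → 𝕜) {c m : ℕ} (hc : c ≤ Fintype.card ι)
    (hm : m ≤ c + 1) (hm' : m + c ≤ Fintype.card ι + 1) :
    ((Fintype.card ι).choose c * m : ℕ) * ‖𝔼 b, G b - 𝔼 b ∈ slice ι c, G b‖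
      ≤ 2 ^ Fintype.card ι * 𝔼 b, ‖upGradient G b‖ := by
  set M := Fintype.card ι with hM
  set a : ℕ → 𝕜 := fun k ↦ 𝔼 b ∈ slice ι k, G b
  set Δ : ℕ → ℝ := fun j ↦ dist (a j) (a (j + 1))
  have card_cube : (Fintype.card (ι → Bool) : ℝ) = 2 ^ M := by simp [hM]
  have telescope_le : 2 ^ M * ‖𝔼 b, G b - a c‖ ≤ ∑ j ∈ Finset.range M,
      ((∑ k ∈ Finset.range (M + 1) with j ∈ Finset.Ico (min k c) (max k c), M.choose k : ℕ) : ℝ)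
        * Δ j := by
    refine le_trans (le_of_eq ?_) (norm_sum_choose_mul_sub_le a hc)
    rw [← two_pow_mul_expect_sub_expect_slice, norm_mul]
    simp [a, hM]
  refine le_of_mul_le_mul_left ?_ (show (0 : ℝ) < 2 ^ M by positivity)
  calc (2 : ℝ) ^ M * ((M.choose c * m : ℕ) * ‖𝔼 b, G b - a c‖)
      ≤ (∑ j ∈ Finset.range M, ((∑ k ∈ Finset.range (M + 1)
          with j ∈ Finset.Ico (min k c) (max k c), M.choose k : ℕ) : ℝ) * Δ j)
            * (M.choose c * m : ℕ) := by
        rw [mul_left_comm, mul_comm]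
        gcongr
    _ ≤ ∑ j ∈ Finset.range M, 2 ^ M * ((M.choose j * (M - j) : ℕ) * Δ j) := by
        rw [Finset.sum_mul]
        refine Finset.sum_le_sum fun j _ ↦ ?_
        rw [mul_right_comm, ← mul_assoc]
        refine mul_le_mul_of_nonneg_right ?_ dist_nonneg
        exact_mod_cast sum_choose_between_le hc hm hm'
    _ ≤ 2 ^ M * ∑ j ∈ Finset.range (M + 1), ∑ b ∈ slice ι j, ‖upGradient G b‖ := by
        rw [← Finset.mul_sum]
        gcongr
        refine (Finset.sum_le_sum fun j _ ↦ choose_mul_dist_le_sum_slice G j).trans ?_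
        refine Finset.sum_le_sum_of_subset_of_nonneg (by simp) fun j _ _ ↦ ?_
        exact Finset.sum_nonneg fun b _ ↦ norm_nonneg _
    _ = 2 ^ M * (2 ^ M * 𝔼 b, ‖upGradient G b‖) := by
        rw [sum_sum_slice, ← Fintype.card_mul_expect, card_cube]

end Slice

/-! ### From the cube to the middle slice -/

lemma sixteen_pow_le_mul_centralBinom_sq (n : ℕ) :
    16 ^ n ≤ (4 * n + 1) * n.centralBinom ^ 2 := by
  induction n with
  | zero => simp
  | succ n ih =>
    refine Nat.le_of_mul_le_mul_right ?_ (show 0 < (n + 1) ^ 2 by positivity)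
    calc 16 ^ (n + 1) * (n + 1) ^ 2 = 16 * (n + 1) ^ 2 * 16 ^ n := by ring
      _ ≤ 16 * (n + 1) ^ 2 * ((4 * n + 1) * n.centralBinom ^ 2) := by gcongr
      _ ≤ (4 * (n + 1) + 1) * (2 * (2 * n + 1) * n.centralBinom) ^ 2 := by
        have : 4 * (4 * n + 1) * (n + 1) ^ 2 ≤ (4 * (n + 1) + 1) * (2 * n + 1) ^ 2 := by
          ring_nf
          lia
        nlinarith [Nat.mul_le_mul_right (4 * n.centralBinom ^ 2) this]
      _ = (4 * (n + 1) + 1) * (n + 1).centralBinom ^ 2 * (n + 1) ^ 2 := by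
        rw [← Nat.succ_mul_centralBinom_succ]
        ring

lemma two_pow_mul_sqrt_le (n : ℕ) :
    (2 : ℝ) ^ (2 * n + 1) * √(2 * n + 1) ≤ 3 * ((2 * n + 1).choose (n + 1) * (n + 1) : ℕ) := by
  have choose_eq : (2 * n + 1).choose (n + 1) * (n + 1) = (2 * n + 1) * n.centralBinom := by
    rw [Nat.centralBinom, Nat.add_one_mul_choose_eq]
  have central : (16 : ℝ) ^ n ≤ (4 * n + 1) * n.centralBinom ^ 2 := by
    exact_mod_cast sixteen_pow_le_mul_centralBinom_sq n
  refine le_of_sq_le_sq ?_ (by positivity)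
  rw [mul_pow, Real.sq_sqrt (by positivity), choose_eq]
  calc ((2 : ℝ) ^ (2 * n + 1)) ^ 2 * (2 * n + 1) = 4 * (2 * n + 1) * 16 ^ n := by
        rw [← pow_mul, show (16 : ℝ) = 2 ^ 4 by norm_num, ← pow_mul]
        ring
    _ ≤ 4 * (2 * n + 1) * ((4 * n + 1) * n.centralBinom ^ 2) := by gcongr
    _ ≤ (2 * n + 1) * (9 * (2 * n + 1)) * n.centralBinom ^ 2 := by
        have : (0 : ℝ) ≤ (2 * n + 1) * (2 * n + 5) * n.centralBinom ^ 2 := by positivity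
        linarith
    _ = (3 * ((2 * n + 1) * n.centralBinom : ℕ)) ^ 2 := by
        push_cast
        ring

lemma expect_abs_mul_abs_le_sqrt {Ω : Type*} [Fintype Ω] (F G : Ω → ℝ) :
    𝔼 a, |F a| * |G a| ≤ √((𝔼 a, F a ^ 2) * 𝔼 a, G a ^ 2) := by
  refine Real.le_sqrt_of_sq_le ?_
  simpa only [sq_abs] using Finset.expect_mul_sq_le_sq_mul_sq Finset.univ (|F ·|) (|G ·|)

lemma expect_abs_le_sqrt {α : Type*} (s : Finset α) (F : α → ℝ) :
    𝔼 a ∈ s, |F a| ≤ √(𝔼 a ∈ s, F a ^ 2) := by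
  obtain rfl | hs := s.eq_empty_or_nonempty
  · simp
  refine Real.le_sqrt_of_sq_le ?_
  simpa [Finset.expect_const hs] using Finset.expect_mul_sq_le_sq_mul_sq s (|F ·|) fun _ ↦ 1

section UpGradient

variable {ι : Type*} [Fintype ι] [DecidableEq ι]

lemma norm_upGradient_comp_le {𝕜 : Type*} [RCLike 𝕜] {f f' : ℝ → 𝕜} {C q : ℝ}
    (hf : ∀ x y, ‖f y - f x - f' x * (y - x : ℝ)‖ ≤ C * (y - x) ^ 2) {Z : (ι → Bool) → ℝ}
    (hC : 0 ≤ C) (hZ : ∀ b x, |Z (Function.update b x true) - Z b| ≤ q) (b : ι → Bool) :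
    ‖upGradient (fun b ↦ f (Z b)) b‖
      ≤ ‖f' (Z b)‖ * |upGradient Z b| + Fintype.card ι * (C * q ^ 2) := by
  let u (x : ι) : ℝ := Z (Function.update b x true)
  have taylor : upGradient (fun b ↦ f (Z b)) b = f' (Z b) * (upGradient Z b : ℝ)
      + ∑ x with b x = false, (f (u x) - f (Z b) - f' (Z b) * (u x - Z b : ℝ)) := by
    simp only [upGradient, Finset.sum_sub_distrib, ← Finset.mul_sum, ← RCLike.ofReal_sum, u]
    ring
  rw [taylor]
  refine (norm_add_le _ _).trans (add_le_add ?_ ?_)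
  · rw [norm_mul, RCLike.norm_ofReal]
  · refine (norm_sum_le_of_le _ fun x _ ↦ (hf (Z b) (u x)).trans
      (mul_le_mul_of_nonneg_left ((sq_abs _).symm.trans_le
        (pow_le_pow_left₀ (abs_nonneg _) (hZ b x) 2)) hC)).trans ?_
    rw [Finset.sum_const, nsmul_eq_mul]
    gcongr
    exact Finset.card_le_univ _

/-- The letters `true` and `false`, encoded as the centred values `1 / 2` and `-1 / 2`. -/
def spin (t : Bool) : ℝ := if t then 1 / 2 else -1 / 2

lemma expect_upGradient (Z : (ι → Bool) → ℝ) :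
    𝔼 b, upGradient Z b = 2 * 𝔼 b, Z b * ∑ x, spin (b x) := by
  have by_parts (x : ι) : 𝔼 b : ι → Bool, (if b x = false then Z (Function.update b x true) - Z b
      else 0) = 2 * 𝔼 b, Z b * spin (b x) := by
    let flip (b : ι → Bool) : ι → Bool := Function.update b x (!b x)
    have flip_invol : Function.Involutive flip := fun b ↦ by simp [flip]
    have symmetrize (F : (ι → Bool) → ℝ) : 2 * 𝔼 b, F b = 𝔼 b, (F b + F (flip b)) := by
      rw [Finset.expect_add_distrib, Fintype.expect_equiv (flip_invol.toPerm flip)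
        (fun b ↦ F (flip b)) F fun b ↦ rfl, two_mul]
    refine mul_left_cancel₀ two_ne_zero ?_
    rw [mul_left_comm, symmetrize, symmetrize, Finset.mul_expect]
    refine Finset.expect_congr rfl fun b _ ↦ ?_
    cases hb : b x
    · simp [flip, hb, spin]
      ring
    · have : Function.update (Function.update b x false) x true = b := by
        rw [Function.update_idem, ← hb, Function.update_eq_self]
      simp [flip, hb, spin, this]
      ring
  simp_rw [upGradient, Finset.sum_filter, Finset.expect_sum_comm, by_parts, Finset.mul_sum,
    Finset.expect_sum_comm, Finset.mul_sum]

lemma norm_expect_sub_expect_middle_slice_le {𝕜 : Type*} [RCLike 𝕜]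
    {n : ℕ} (hι : Fintype.card ι = 2 * n + 1) (G : (ι → Bool) → 𝕜) :
    √(Fintype.card ι) * ‖𝔼 b, G b - 𝔼 b ∈ slice ι (n + 1), G b‖ ≤ 3 * 𝔼 b, ‖upGradient G b‖ := by
  have h := norm_expect_sub_expect_slice_le G (c := n + 1) (m := n + 1) (by lia) (by lia) (by lia)
  have card_cast : (Fintype.card ι : ℝ) = 2 * n + 1 := by rw [hι]; push_cast; rfl
  rw [hι] at h
  rw [card_cast]
  refine le_of_mul_le_mul_left ?_ (show (0 : ℝ) < 2 ^ (2 * n + 1) by positivity)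
  calc _ ≤ 3 * ((2 * n + 1).choose (n + 1) * (n + 1) : ℕ)
        * ‖𝔼 b, G b - 𝔼 b ∈ slice ι (n + 1), G b‖ := by
        rw [← mul_assoc]
        exact mul_le_mul_of_nonneg_right (two_pow_mul_sqrt_le n) (norm_nonneg _)
    _ ≤ _ := by linarith

end UpGradient

namespace IsLocalFamily

variable {ι : Type*} [Fintype ι] [DecidableEq ι] {A : ι → Finset ι} {d : ℕ} {K : ℝ}
  {X : ι → (ι → Bool) → ℝ} (hX : IsLocalFamily A d K X)
include hX

lemma bound_nonneg [Nonempty ι] : 0 ≤ K :=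
  (abs_nonneg _).trans (hX.abs_le (Classical.arbitrary ι) fun _ ↦ false)

lemma one_le_degree [Nonempty ι] : (1 : ℝ) ≤ d := by
  have x := Classical.arbitrary ι
  exact_mod_cast (Finset.card_pos.2 ⟨x, hX.self_mem_overlaps x⟩).trans_le (hX.card_overlaps_le x)

lemma sum_update_sub_sum (b : ι → Bool) (x : ι) : ∑ y, X y (Function.update b x true) - ∑ y, X y b
    = ∑ y ∈ overlaps A x, (X y (Function.update b x true) - X y b) := by
  rw [← Finset.sum_sub_distrib]
  refine (Finset.sum_subset (Finset.subset_univ _) fun y _ hy ↦ sub_eq_zero.2 ?_).symm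
  refine hX.dependsOn_compl hy fun i hi ↦ Function.update_of_ne ?_ _ _
  rintro rfl
  exact hi (hX.mem_self i)

lemma abs_sum_update_sub_sum_le (b : ι → Bool) (x : ι) :
    |∑ y, X y (Function.update b x true) - ∑ y, X y b| ≤ 2 * d * K := by
  have : Nonempty ι := ⟨x⟩
  have hK := hX.bound_nonneg
  rw [hX.sum_update_sub_sum]
  refine (Finset.abs_sum_le_sum_abs _ _).trans ((Finset.sum_le_card_nsmul _ _ (2 * K)
    fun y _ ↦ (abs_sub _ _).trans ?_).trans ?_)
  · linarith [hX.abs_le y (Function.update b x true), hX.abs_le y b]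
  · rw [nsmul_eq_mul, mul_comm 2 (d : ℝ), mul_assoc]
    gcongr
    exact hX.card_overlaps_le x

protected lemma upGradient : IsLocalFamily (fun x ↦ (overlaps A x).biUnion A) (d ^ 3) (2 * d * K)
    fun x b ↦ if b x = false then ∑ y, X y (Function.update b x true) - ∑ y, X y b else 0 where
  mem_self x := Finset.mem_biUnion.2 ⟨x, hX.self_mem_overlaps x, hX.mem_self x⟩
  card_overlaps_le := hX.card_overlaps_biUnion_le
  dependsOn x b b' hbb' := by
    have hx : b x = b' x := hbb' x (Finset.mem_biUnion.2
      ⟨x, hX.self_mem_overlaps x, hX.mem_self x⟩)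
    have hbb'' : ∀ i ∈ ((overlaps A x).biUnion A : Set ι),
        Function.update b x true i = Function.update b' x true i := fun i hi ↦ by
      simp only [Function.update_apply, hbb' i hi]
    simp only [hX.sum_update_sub_sum, hx]
    congr 1
    exact Finset.sum_congr rfl fun y hy ↦
      congrArg₂ _ (hX.dependsOn_biUnion hy hbb'') (hX.dependsOn_biUnion hy hbb')
  abs_le x b := by
    have : Nonempty ι := ⟨x⟩
    have hK := hX.bound_nonneg
    split_ifs
    · exact hX.abs_sum_update_sub_sum_le b x
    · rw [abs_zero]
      positivity

lemma expect_sq_sum_upGradient_le (hX₁ : 𝔼 b, (∑ y, X y b) * ∑ x, spin (b x) = 0) :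
    𝔼 b, upGradient (fun b ↦ ∑ y, X y b) b ^ 2 ≤ Fintype.card ι * (4 * d ^ 3 * K) ^ 2 := by
  have expect_zero : 𝔼 b, upGradient (fun b ↦ ∑ y, X y b) b = 0 := by
    rw [expect_upGradient, hX₁, mul_zero]
  have h := hX.upGradient.expect_sq_sum_sub_expect_le
  simp only [← Finset.sum_filter] at h
  simp only [upGradient] at expect_zero ⊢
  rw [expect_zero] at h
  simp only [sub_zero] at h
  refine h.trans ?_
  have : ((d ^ 5 : ℕ) : ℝ) ≤ (d ^ 6 : ℕ) := by
    obtain rfl | hd := d.eq_zero_or_pos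
    · simp
    · exact_mod_cast Nat.pow_le_pow_right hd (by norm_num)
  push_cast at this
  have hKd := mul_le_mul_of_nonneg_right this (sq_nonneg (4 * K))
  gcongr
  push_cast
  linarith

lemma expect_abs_upGradient_sum_le (hX₁ : 𝔼 b, (∑ y, X y b) * ∑ x, spin (b x) = 0) [Nonempty ι] :
    𝔼 b, |upGradient (fun b ↦ ∑ y, X y b) b| ≤ √(Fintype.card ι) * (4 * d ^ 3 * K) := by
  have hK := hX.bound_nonneg
  refine (expect_abs_le_sqrt _ _).trans
    ((Real.sqrt_le_sqrt (hX.expect_sq_sum_upGradient_le hX₁)).trans_eq ?_)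
  rw [Real.sqrt_mul (Nat.cast_nonneg _), Real.sqrt_sq (by positivity)]

lemma expect_abs_sum_mul_abs_upGradient_sum_le [Nonempty ι] (hX₀ : ∀ x, 𝔼 b, X x b = 0)
    (hX₁ : 𝔼 b, (∑ y, X y b) * ∑ x, spin (b x) = 0) :
    𝔼 b, |∑ x, X x b| * |upGradient (fun b ↦ ∑ x, X x b) b|
      ≤ Fintype.card ι * (4 * d ^ 4 * K ^ 2) := by
  refine (expect_abs_mul_abs_le_sqrt _ _).trans (Real.sqrt_le_iff.2 ⟨by positivity, ?_⟩)
  calc _ ≤ Fintype.card ι * (d * K ^ 2) * (Fintype.card ι * (4 * d ^ 3 * K) ^ 2) :=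
        mul_le_mul (hX.expect_sq_sum_le hX₀) (hX.expect_sq_sum_upGradient_le hX₁)
          (Finset.expect_nonneg fun b _ ↦ sq_nonneg _) (by positivity)
    _ ≤ Fintype.card ι * (d ^ 2 * K ^ 2) * (Fintype.card ι * (4 * d ^ 3 * K) ^ 2) := by
        gcongr
        exact le_self_pow₀ hX.one_le_degree two_ne_zero
    _ = (Fintype.card ι * (4 * d ^ 4 * K ^ 2)) ^ 2 := by ring

variable {n : ℕ} (hι : Fintype.card ι = 2 * n + 1)
variable [Nonempty ι] (hX₀ : ∀ x, 𝔼 b, X x b = 0)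
  (hX₁ : 𝔼 b, (∑ y, X y b) * ∑ x, spin (b x) = 0)
include hι hX₀ hX₁

lemma abs_expect_slice_sum_le : |𝔼 b ∈ slice ι (n + 1), ∑ x, X x b| ≤ 12 * d ^ 3 * K := by
  have hcard : 0 < √(Fintype.card ι : ℝ) := Real.sqrt_pos.2 (by exact_mod_cast Fintype.card_pos)
  have h := norm_expect_sub_expect_middle_slice_le hι fun b ↦ ∑ x, X x b
  simp only [Finset.expect_sum_comm Finset.univ, hX₀, Finset.sum_const_zero, zero_sub, norm_neg,
    Real.norm_eq_abs] at h
  refine le_of_mul_le_mul_left (h.trans ?_) hcard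
  linarith [hX.expect_abs_upGradient_sum_le hX₁]

lemma abs_expect_sq_sub_expect_slice_sq_le :
    |𝔼 b, (∑ x, X x b) ^ 2 - 𝔼 b ∈ slice ι (n + 1), (∑ x, X x b) ^ 2|
      ≤ 36 * d ^ 4 * K ^ 2 * √(Fintype.card ι) := by
  have _ := hX.bound_nonneg
  have hd := hX.one_le_degree
  have hcard : 0 < √(Fintype.card ι : ℝ) := Real.sqrt_pos.2 (by exact_mod_cast Fintype.card_pos)
  have chain_rule (b : ι → Bool) : |upGradient (fun b ↦ (∑ x, X x b) ^ 2) b|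
      ≤ 2 * (|∑ x, X x b| * |upGradient (fun b ↦ ∑ x, X x b) b|)
        + Fintype.card ι * (1 * (2 * d * K) ^ 2) := by
    refine (norm_upGradient_comp_le (𝕜 := ℝ) (f := fun y ↦ y ^ 2) (f' := fun y ↦ 2 * y) (C := 1)
      (fun x y ↦ ?_) zero_le_one hX.abs_sum_update_sub_sum_le b).trans_eq ?_
    · rw [one_mul, Real.norm_eq_abs, RCLike.ofReal_real_eq_id, id,
        show y ^ 2 - x ^ 2 - 2 * x * (y - x) = (y - x) ^ 2 by ring, abs_sq]
    · rw [Real.norm_eq_abs, abs_mul, abs_two, mul_assoc]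
  refine le_of_mul_le_mul_left ?_ hcard
  calc _ ≤ 3 * 𝔼 b, |upGradient (fun b ↦ (∑ x, X x b) ^ 2) b| :=
        norm_expect_sub_expect_middle_slice_le hι fun b ↦ (∑ x, X x b) ^ 2
    _ ≤ 3 * (2 * (Fintype.card ι * (4 * d ^ 4 * K ^ 2))
        + Fintype.card ι * (4 * d ^ 2 * K ^ 2)) := by
        gcongr
        refine (Finset.expect_le_expect fun b _ ↦ chain_rule b).trans ?_
        rw [Finset.expect_add_distrib, ← Finset.mul_expect, Fintype.expect_const]
        linarith [hX.expect_abs_sum_mul_abs_upGradient_sum_le hX₀ hX₁]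
    _ ≤ 3 * (2 * (Fintype.card ι * (4 * d ^ 4 * K ^ 2))
        + Fintype.card ι * (4 * d ^ 4 * K ^ 2)) := by
        gcongr
        norm_num
    _ = √(Fintype.card ι) ^ 2 * (36 * d ^ 4 * K ^ 2) := by
        rw [Real.sq_sqrt (Nat.cast_nonneg _)]
        ring
    _ = _ := by ring

omit hX₀ in
lemma norm_expect_exp_sub_expect_slice_exp_le :
    ‖𝔼 b, Complex.exp ((∑ x, X x b : ℝ) * I)
      - 𝔼 b ∈ slice ι (n + 1), Complex.exp ((∑ x, X x b : ℝ) * I)‖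
      ≤ 12 * d ^ 3 * K + 24 * d ^ 2 * K ^ 2 * √(Fintype.card ι) := by
  have hcard : 0 < √(Fintype.card ι : ℝ) := Real.sqrt_pos.2 (by exact_mod_cast Fintype.card_pos)
  have chain_rule (b : ι → Bool) :
      ‖upGradient (fun b ↦ Complex.exp ((∑ x, X x b : ℝ) * I)) b‖
        ≤ |upGradient (fun b ↦ ∑ x, X x b) b| + Fintype.card ι * (2 * (2 * d * K) ^ 2) := by
    refine (norm_upGradient_comp_le (f := fun y ↦ Complex.exp (y * I))
      (f' := fun y ↦ Complex.exp (y * I) * I) (fun x y ↦ ?_) zero_le_two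
      hX.abs_sum_update_sub_sum_le b).trans_eq ?_
    · have factor : Complex.exp (y * I) - Complex.exp (x * I)
          - Complex.exp (x * I) * I * ((y - x : ℝ) : ℂ)
          = Complex.exp (x * I) * (Complex.exp ((y - x : ℝ) * I) - 1 - (y - x : ℝ) * I) := by
        have : (y : ℂ) * I = x * I + (y - x : ℝ) * I := by push_cast; ring
        rw [this, Complex.exp_add]
        ring
      refine (congrArg norm factor).trans_le ?_
      rw [norm_mul, Complex.norm_exp_ofReal_mul_I, one_mul]
      exact norm_exp_mul_I_sub_one_sub_le _
    · rw [norm_mul, Complex.norm_exp_ofReal_mul_I, Complex.norm_I, one_mul, one_mul]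
  refine le_of_mul_le_mul_left ?_ hcard
  calc _ ≤ 3 * 𝔼 b, ‖upGradient (fun b ↦ Complex.exp ((∑ x, X x b : ℝ) * I)) b‖ :=
        norm_expect_sub_expect_middle_slice_le hι fun b ↦ Complex.exp ((∑ x, X x b : ℝ) * I)
    _ ≤ 3 * (√(Fintype.card ι) * (4 * d ^ 3 * K)
        + Fintype.card ι * (2 * (2 * d * K) ^ 2)) := by
        gcongr
        refine (Finset.expect_le_expect fun b _ ↦ chain_rule b).trans ?_
        rw [Finset.expect_add_distrib, Fintype.expect_const]
        gcongr
        exact hX.expect_abs_upGradient_sum_le hX₁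
    _ = 3 * (√(Fintype.card ι) * (4 * d ^ 3 * K)
        + √(Fintype.card ι) ^ 2 * (2 * (2 * d * K) ^ 2)) := by
        rw [Real.sq_sqrt (Nat.cast_nonneg _)]
    _ = _ := by ring

end IsLocalFamily

/-! ### Gaussian limits of finite averages -/

/-- For `a` uniform on `s n`, the random variable `W n a / √n` is asymptotically centred Gaussian
of variance `v`: its first two moments and its characteristic function converge. -/
structure HasGaussianLimit {Ω : ℕ → Type*} (s : ∀ n, Finset (Ω n)) (W : ∀ n, Ω n → ℝ) (v : ℝ) :
    Prop where
  mean : Tendsto (fun n : ℕ ↦ (𝔼 a ∈ s n, W n a) / √n) atTop (nhds 0)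
  sq : Tendsto (fun n : ℕ ↦ (𝔼 a ∈ s n, W n a ^ 2) / n) atTop (nhds v)
  charFun : ∀ t : ℝ, Tendsto (fun n : ℕ ↦ 𝔼 a ∈ s n, Complex.exp ((t / √n * W n a : ℝ) * I)) atTop
    (nhds (Real.exp (-(v * t ^ 2) / 2) : ℂ))

lemma tendsto_div_sqrt_natCast (C : ℝ) : Tendsto (fun n : ℕ ↦ C / √n) atTop (nhds 0) :=
  (Real.tendsto_sqrt_atTop.comp tendsto_natCast_atTop_atTop).const_div_atTop C

lemma tendsto_of_norm_sub_le_div_sqrt {E : Type*} [SeminormedAddCommGroup E] {f g : ℕ → E} {y : E}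
    {C : ℝ} (hf : Tendsto f atTop (nhds y)) (hfg : ∀ᶠ n : ℕ in atTop, ‖g n - f n‖ ≤ C / √n) :
    Tendsto g atTop (nhds y) :=
  tendsto_of_tendsto_of_dist hf (squeeze_zero' (Eventually.of_forall fun _ ↦ dist_nonneg)
    (hfg.mono fun n hn ↦ by rwa [dist_comm, dist_eq_norm]) (tendsto_div_sqrt_natCast C))

lemma abs_expect_sq_sub_expect_sq_le {α : Type*} {s : Finset α} (hs : s.Nonempty) {F G : α → ℝ}
    {C : ℝ} (hFG : ∀ a ∈ s, |G a - F a| ≤ C) :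
    |𝔼 a ∈ s, G a ^ 2 - 𝔼 a ∈ s, F a ^ 2| ≤ 2 * C * √(𝔼 a ∈ s, F a ^ 2) + C ^ 2 := by
  have hC : 0 ≤ C := (abs_nonneg _).trans (hFG _ hs.choose_spec)
  have pointwise : ∀ a ∈ s, |G a ^ 2 - F a ^ 2| ≤ 2 * C * |F a| + C ^ 2 := by
    intro a ha
    rw [show G a ^ 2 - F a ^ 2 = 2 * (G a - F a) * F a + (G a - F a) ^ 2 by ring]
    refine (abs_add_le _ _).trans (add_le_add ?_ ?_)
    · rw [abs_mul, abs_mul, abs_two]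
      gcongr
      exact hFG a ha
    · rw [abs_pow]
      gcongr
      exact hFG a ha
  rw [← Finset.expect_sub_distrib]
  calc _ ≤ 𝔼 a ∈ s, (2 * C * |F a| + C ^ 2) :=
        (Finset.abs_expect_le _ _).trans (Finset.expect_le_expect pointwise)
    _ ≤ 2 * C * √(𝔼 a ∈ s, F a ^ 2) + C ^ 2 := by
        rw [Finset.expect_add_distrib, ← Finset.mul_expect, Finset.expect_const hs]
        gcongr
        exact expect_abs_le_sqrt _ _

namespace HasGaussianLimit

variable {Ω Ω' : ℕ → Type*} {s : ∀ n, Finset (Ω n)} {s' : ∀ n, Finset (Ω' n)} {W : ∀ n, Ω n → ℝ}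
  {W' : ∀ n, Ω' n → ℝ} {v : ℝ}

lemma of_expect_eq (h : HasGaussianLimit s W v)
    (heq : ∀ n (F : ℝ → ℂ), 𝔼 a ∈ s' n, F (W' n a) = 𝔼 a ∈ s n, F (W n a)) :
    HasGaussianLimit s' W' v := by
  have heq_real (n : ℕ) (F : ℝ → ℝ) : 𝔼 a ∈ s' n, F (W' n a) = 𝔼 a ∈ s n, F (W n a) := by
    have := heq n fun y ↦ F y
    rw [← Complex.ofReal_inj]
    exact (map_expect Complex.ofRealHom _ _).trans
      (this.trans (map_expect Complex.ofRealHom _ _).symm)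
  refine ⟨?_, ?_, fun t ↦ ?_⟩
  · simpa only [heq_real _ fun y ↦ y] using h.mean
  · simpa only [heq_real _ fun y ↦ y ^ 2] using h.sq
  · exact (h.charFun t).congr fun n ↦ (heq n fun y ↦ Complex.exp ((t / √n * y : ℝ) * I)).symm

lemma of_abs_sub_le {W' : ∀ n, Ω n → ℝ} {C : ℝ} (h : HasGaussianLimit s W v)
    (hWW' : ∀ n, ∀ a ∈ s n, |W' n a - W n a| ≤ C) (hs : ∀ n, (s n).Nonempty) :
    HasGaussianLimit s W' v := by
  have hC : 0 ≤ C := (abs_nonneg _).trans (hWW' 0 _ (hs 0).choose_spec)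
  refine ⟨?_, ?_, fun t ↦ ?_⟩
  · refine tendsto_of_norm_sub_le_div_sqrt (C := C) h.mean (Eventually.of_forall fun n ↦ ?_)
    rw [← sub_div, ← Finset.expect_sub_distrib, norm_div, Real.norm_of_nonneg (Real.sqrt_nonneg _)]
    gcongr
    exact norm_expect_le_of_forall_mem (hs n) (hWW' n)
  · have bounded : ∀ᶠ n : ℕ in atTop, (𝔼 a ∈ s n, W n a ^ 2) / n ≤ v + 1 :=
      h.sq.eventually (eventually_le_nhds (lt_add_one v))
    refine tendsto_of_norm_sub_le_div_sqrt (C := 2 * C * √(v + 1) + C ^ 2) h.sq ?_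
    filter_upwards [bounded, eventually_ge_atTop 1] with n hn h1
    have hn1 : (1 : ℝ) ≤ n := by exact_mod_cast h1
    have hsqrt : 1 ≤ √(n : ℝ) := Real.one_le_sqrt.2 hn1
    have second_moment : √(𝔼 a ∈ s n, W n a ^ 2) ≤ √(v + 1) * √n := by
      rw [← Real.sqrt_mul' _ (Nat.cast_nonneg n)]
      exact Real.sqrt_le_sqrt ((div_le_iff₀ (by linarith)).1 hn)
    rw [← sub_div, norm_div, Real.norm_of_nonneg (Nat.cast_nonneg n)]
    nth_rw 1 [← Real.mul_self_sqrt (Nat.cast_nonneg n)]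
    rw [← div_div]
    gcongr
    rw [div_le_iff₀ (by linarith)]
    calc _ ≤ 2 * C * √(𝔼 a ∈ s n, W n a ^ 2) + C ^ 2 * 1 := by
          rw [mul_one]
          exact abs_expect_sq_sub_expect_sq_le (hs n) (hWW' n)
      _ ≤ 2 * C * (√(v + 1) * √n) + C ^ 2 * √n := by gcongr
      _ = _ := by ring
  · refine tendsto_of_norm_sub_le_div_sqrt (C := |t| * C) (h.charFun t)
      (Eventually.of_forall fun n ↦ ?_)
    rw [← Finset.expect_sub_distrib]
    refine norm_expect_le_of_forall_mem (hs n) fun a ha ↦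
      (norm_exp_mul_I_sub_exp_mul_I_le _ _).trans ?_
    rw [← mul_sub, abs_mul, abs_div, abs_of_nonneg (Real.sqrt_nonneg _), div_mul_eq_mul_div]
    gcongr
    exact hWW' n a ha

end HasGaussianLimit

lemma IsLocalFamily.norm_expect_slice_exp_sub_le {ι : Type*} [Fintype ι] [DecidableEq ι]
    [Nonempty ι] {A : ι → Finset ι} {d : ℕ} {K : ℝ} {X : ι → (ι → Bool) → ℝ}
    (hX : IsLocalFamily A d K X) {n : ℕ} (hι : Fintype.card ι = 2 * n + 1)
    (hX₀ : ∀ x, 𝔼 b, X x b = 0) (hX₁ : 𝔼 b, (∑ x, X x b) * ∑ x, spin (b x) = 0) :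
    ‖𝔼 b ∈ slice ι (n + 1), Complex.exp ((∑ x, X x b : ℝ) * I)
      - Real.exp (-(𝔼 b, (∑ x, X x b) ^ 2) / 2)‖
      ≤ 12 * d ^ 3 * K + 24 * d ^ 2 * K ^ 2 * √(Fintype.card ι)
        + Fintype.card ι * (4 * d ^ 4 * K ^ 3) := by
  rw [← sub_add_sub_cancel, ← norm_neg, neg_add, neg_sub]
  refine (norm_add_le _ _).trans
    (add_le_add (hX.norm_expect_exp_sub_expect_slice_exp_le hι hX₁) ?_)
  rw [norm_neg]
  exact hX.norm_expect_exp_sum_sub_le hX₀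

section LocalFamily

variable {ι : ℕ → Type*} [∀ n, Fintype (ι n)]

lemma tendsto_card_div (hι : ∀ n, Fintype.card (ι n) = 2 * n + 1) :
    Tendsto (fun n : ℕ ↦ (Fintype.card (ι n) : ℝ) / n) atTop (nhds 2) := by
  have h : Tendsto (fun n : ℕ ↦ 2 + (n : ℝ)⁻¹) atTop (nhds (2 + 0)) :=
    tendsto_inv_atTop_nhds_zero_nat.const_add 2
  rw [add_zero] at h
  refine h.congr' (eventually_ne_atTop 0 |>.mono fun n hn ↦ ?_)
  simp only [hι]
  push_cast
  field_simp

lemma sqrt_card_le (hι : ∀ n, Fintype.card (ι n) = 2 * n + 1) {n : ℕ} (hn : 1 ≤ n) :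
    √(Fintype.card (ι n) : ℝ) ≤ 2 * √n := by
  rw [Real.sqrt_le_iff, mul_pow, Real.sq_sqrt (Nat.cast_nonneg n), hι]
  exact ⟨by positivity, by exact_mod_cast (by lia)⟩

namespace IsLocalFamily

variable [∀ n, DecidableEq (ι n)] {A : ∀ n, ι n → Finset (ι n)} {d : ℕ} {K v : ℝ}
  {X : ∀ n, ι n → (ι n → Bool) → ℝ}
  (hι : ∀ n, Fintype.card (ι n) = 2 * n + 1) (hX : ∀ n, IsLocalFamily (A n) d K (X n))
  (hX₀ : ∀ᶠ n in atTop, ∀ x, 𝔼 b, X n x b = 0)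
  (hX₁ : ∀ᶠ n in atTop, 𝔼 b, (∑ x, X n x b) * ∑ x, spin (b x) = 0)
  (hv : ∀ᶠ n in atTop, 𝔼 b, (∑ x, X n x b) ^ 2 = Fintype.card (ι n) * v)
include hι hX hX₀ hX₁

lemma tendsto_expect_slice_div_sqrt :
    Tendsto (fun n : ℕ ↦ (𝔼 b ∈ slice (ι n) (n + 1), ∑ x, X n x b) / √n) atTop (nhds 0) := by
  refine tendsto_of_norm_sub_le_div_sqrt (C := 12 * d ^ 3 * K) tendsto_const_nhds ?_
  filter_upwards [hX₀, hX₁] with n h₀ h₁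
  have : Nonempty (ι n) := Fintype.card_pos_iff.1 (by rw [hι]; lia)
  rw [sub_zero, norm_div, Real.norm_of_nonneg (Real.sqrt_nonneg _)]
  gcongr
  exact (hX n).abs_expect_slice_sum_le (hι n) h₀ h₁

include hv

lemma tendsto_expect_slice_sq_div : Tendsto
    (fun n : ℕ ↦ (𝔼 b ∈ slice (ι n) (n + 1), (∑ x, X n x b) ^ 2) / n) atTop (nhds (2 * v)) := by
  refine tendsto_of_norm_sub_le_div_sqrt (C := 72 * d ^ 4 * K ^ 2)
    ((tendsto_card_div hι).mul_const v) ?_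
  filter_upwards [hX₀, hX₁, hv, eventually_ge_atTop 1] with n h₀ h₁ h₂ hn
  have : Nonempty (ι n) := Fintype.card_pos_iff.1 (by rw [hι]; lia)
  have hn0 : 0 < √(n : ℝ) := Real.sqrt_pos.2 (by exact_mod_cast hn)
  rw [div_mul_eq_mul_div, ← h₂, ← sub_div, norm_div, Real.norm_of_nonneg (Nat.cast_nonneg n),
    norm_sub_rev, div_le_div_iff₀ (by exact_mod_cast hn) hn0]
  calc _ ≤ 36 * d ^ 4 * K ^ 2 * (2 * √n) * √n := by
        gcongr
        refine ((hX n).abs_expect_sq_sub_expect_slice_sq_le (hι n) h₀ h₁).trans ?_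
        gcongr
        exact sqrt_card_le hι hn
    _ = 72 * d ^ 4 * K ^ 2 * n := by
        linear_combination 72 * d ^ 4 * K ^ 2 * Real.mul_self_sqrt (Nat.cast_nonneg (α := ℝ) n)

lemma tendsto_expect_slice_exp (t : ℝ) : Tendsto
    (fun n : ℕ ↦ 𝔼 b ∈ slice (ι n) (n + 1), Complex.exp ((t / √n * ∑ x, X n x b : ℝ) * I)) atTop
    (nhds (Real.exp (-(2 * v * t ^ 2) / 2))) := by
  have limit : Tendsto (fun n : ℕ ↦ (Real.exp (-(Fintype.card (ι n) / n * v * t ^ 2) / 2) : ℂ))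
      atTop (nhds (Real.exp (-(2 * v * t ^ 2) / 2))) :=
    (Complex.continuous_ofReal.comp Real.continuous_exp).continuousAt.tendsto.comp
      (((((tendsto_card_div hι).mul_const v).mul_const (t ^ 2)).neg).div_const 2)
  refine tendsto_of_norm_sub_le_div_sqrt
    (C := 12 * d ^ 3 * (|t| * K) + 48 * d ^ 2 * (|t| * K) ^ 2 + 12 * d ^ 4 * (|t| * K) ^ 3)
    limit ?_
  filter_upwards [hX₀, hX₁, hv, eventually_ge_atTop 1] with n h₀ h₁ h₂ hn
  have : Nonempty (ι n) := Fintype.card_pos_iff.1 (by rw [hι]; lia)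
  have hK := (hX n).bound_nonneg
  have hn0 : 0 < √(n : ℝ) := Real.sqrt_pos.2 (by exact_mod_cast hn)
  have hsq : √(n : ℝ) ^ 2 = n := Real.sq_sqrt (Nat.cast_nonneg n)
  have hcard : (Fintype.card (ι n) : ℝ) ≤ 3 * n := by
    rw [hι]
    exact_mod_cast (by lia)
  have h := ((hX n).smul (t / √n)).norm_expect_slice_exp_sub_le (hι n)
    (fun x ↦ by rw [← Finset.mul_expect, h₀, mul_zero])
    (by simp_rw [← Finset.mul_sum, mul_assoc, ← Finset.mul_expect, h₁, mul_zero])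
  have variance_eq : (t / √n) ^ 2 * (Fintype.card (ι n) * v)
      = Fintype.card (ι n) / n * v * t ^ 2 := by
    rw [div_pow, hsq]
    ring
  simp_rw [← Finset.mul_sum, mul_pow (t / √n), ← Finset.mul_expect, h₂, variance_eq, abs_div,
    abs_of_pos hn0] at h
  calc _ ≤ _ := h
    _ ≤ 12 * d ^ 3 * (|t| / √n * K) + 24 * d ^ 2 * (|t| / √n * K) ^ 2 * (2 * √n)
        + 3 * √n ^ 2 * (4 * d ^ 4 * (|t| / √n * K) ^ 3) := by
      rw [hsq]
      gcongr
      exact sqrt_card_le hι hn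
    _ = _ := by
      field_simp
      ring

theorem hasGaussianLimit_slice :
    HasGaussianLimit (fun n ↦ slice (ι n) (n + 1)) (fun n b ↦ ∑ x, X n x b) (2 * v) :=
  ⟨tendsto_expect_slice_div_sqrt hι hX hX₀ hX₁, tendsto_expect_slice_sq_div hι hX hX₀ hX₁ hv,
    tendsto_expect_slice_exp hι hX hX₀ hX₁ hv⟩

end IsLocalFamily

end LocalFamily

/-! ### Local statistics of cyclic words -/

lemma sum_spin {ι : Type*} [Fintype ι] (b : ι → Bool) :
    ∑ x, spin (b x) = (Finset.card {x | b x} : ℝ) - Fintype.card ι / 2 := by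
  have spin_eq (t : Bool) : spin t = (if t then 1 else 0) - 1 / 2 := by cases t <;> norm_num [spin]
  simp_rw [spin_eq, Finset.sum_sub_distrib, Finset.sum_boole]
  simp [div_eq_mul_inv]

section Cube

variable {ι κ α : Type*} [Fintype ι] [DecidableEq ι] [Fintype κ] [DecidableEq κ]

lemma expect_comp_of_injective [Fintype α] [Nonempty α] {𝕜 : Type*} [Field 𝕜] [CharZero 𝕜]
    {e : κ → ι} (he : Function.Injective e) (F : (κ → α) → 𝕜) :
    𝔼 b : ι → α, F (b ∘ e) = 𝔼 w, F w := by
  classical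
  let E : κ ⊕ ↥(Set.range e)ᶜ ≃ ι :=
    ((Equiv.ofInjective e he).sumCongr (Equiv.refl _)).trans (Equiv.Set.sumCompl _)
  let Φ : (ι → α) ≃ (κ → α) × (↥(Set.range e)ᶜ → α) :=
    (E.symm.arrowCongr (Equiv.refl α)).trans (Equiv.sumArrowEquivProdArrow _ _ _)
  rw [Fintype.expect_equiv Φ (fun b ↦ F (b ∘ e)) (fun q ↦ F q.1) fun _ ↦ rfl,
    ← Finset.univ_product_univ, Finset.expect_product]
  simp

lemma expect_comp_eval (f : Bool → ℝ) (x : ι) :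
    𝔼 b : ι → Bool, f (b x) = (f true + f false) / 2 := by
  refine (expect_comp_of_injective (Function.injective_of_subsingleton fun _ : Unit ↦ x)
    fun w ↦ f (w ())).trans ?_
  rw [Fintype.expect_equiv (Equiv.funUnique Unit Bool) (fun w ↦ f (w ())) f fun _ ↦ rfl,
    Fintype.expect_eq_sum_div_card]
  simp

lemma expect_spin (x : ι) : 𝔼 b : ι → Bool, spin (b x) = 0 := by
  rw [expect_comp_eval]
  norm_num [spin]

lemma expect_comp_mul_sum_spin {e : κ → ι} (he : Function.Injective e) (F : (κ → Bool) → ℝ) :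
    𝔼 b : ι → Bool, F (b ∘ e) * ∑ y, spin (b y) = 𝔼 w, F w * ∑ j, spin (w j) := by
  have outside (y) (hy : y ∉ Finset.univ.image e) :
      𝔼 b : ι → Bool, F (b ∘ e) * spin (b y) = 0 := by
    have hF : DependsOn (fun b : ι → Bool ↦ F (b ∘ e)) (Finset.univ.image e : Set ι) :=
      fun _ _ hab ↦ congrArg F (funext fun j ↦ hab _ (by simp))
    rw [expect_mul_of_dependsOn hF, expect_spin, mul_zero]
    exact fun _ _ hab ↦ congrArg spin (hab y hy)
  rw [← expect_comp_of_injective he]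
  simp_rw [Finset.mul_sum, Finset.expect_sum_comm]
  rw [← Finset.sum_subset (Finset.subset_univ (Finset.univ.image e)) fun y _ hy ↦ outside y hy,
    Finset.sum_image he.injOn]
  rfl

lemma expect_spin_mul_sum_spin (x : ι) :
    𝔼 b : ι → Bool, spin (b x) * ∑ y, spin (b y) = 1 / 4 := by
  refine (expect_comp_mul_sum_spin (Function.injective_of_subsingleton fun _ : Unit ↦ x)
    fun w ↦ spin (w ())).trans ?_
  simp only [Finset.univ_unique, Finset.sum_singleton]
  rw [expect_comp_eval (fun t ↦ spin t * spin t)]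
  norm_num [spin]

end Cube

section Window

variable {L M : ℕ}

/-- The word of length `L` read off the cyclic word `b` from position `x` on. -/
def window (L : ℕ) (b : ZMod M → Bool) (x : ZMod M) : Fin L → Bool :=
  fun j ↦ b (x + (j : ℕ))

/-- The positions seen by `window L b x`. -/
def windowSupport (L : ℕ) (x : ZMod M) : Finset (ZMod M) :=
  Finset.univ.image fun j : Fin L ↦ x + (j : ℕ)

lemma injective_add_natCast (hLM : L ≤ M) (x : ZMod M) :
    Function.Injective fun j : Fin L ↦ x + ((j : ℕ) : ZMod M) := by
  intro i j hij
  rw [add_right_inj, ZMod.natCast_eq_natCast_iff] at hij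
  exact Fin.ext (hij.eq_of_lt_of_lt (i.2.trans_le hLM) (j.2.trans_le hLM))

lemma dependsOn_window {β : Type*} (g : (Fin L → Bool) → β) (x : ZMod M) :
    DependsOn (fun b ↦ g (window L b x)) (windowSupport L x : Set (ZMod M)) := fun _ _ hab ↦
  congrArg g (funext fun j ↦ hab _ (by simp [windowSupport]))

/-- Projecting the statistic `g` off the constants and the spins, the latter in the sense that
the cyclic sum of the result is uncorrelated with the total spin. -/
def centered [NeZero L] (g : (Fin L → Bool) → ℝ) (w : Fin L → Bool) : ℝ :=
  g w - 𝔼 u, g u - 4 * (𝔼 u, g u * ∑ j, spin (u j)) * spin (w 0)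

/-- For `g` of mean zero, the sum over all `k` of the covariances of `g (window L b x)` and
`g (window L b (x + k))`, read off a word long enough to contain all windows that overlap the
middle one. -/
def autocovariance (g : (Fin L → Bool) → ℝ) : ℝ :=
  𝔼 w : Fin (3 * L) → Bool, g (fun j ↦ w ⟨L + j, by lia⟩)
    * ∑ k : Fin (2 * L), g (fun j ↦ w ⟨k + j, by lia⟩)

lemma expect_centered [NeZero L] (g : (Fin L → Bool) → ℝ) : 𝔼 w, centered g w = 0 := by
  simp_rw [centered, Finset.expect_sub_distrib, ← Finset.mul_expect, expect_spin]
  simp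

lemma expect_centered_mul_sum_spin [NeZero L] (g : (Fin L → Bool) → ℝ) :
    𝔼 w, centered g w * ∑ j, spin (w j) = 0 := by
  simp_rw [centered, sub_mul, mul_assoc, Finset.expect_sub_distrib, ← Finset.mul_expect,
    expect_spin_mul_sum_spin, Finset.expect_sum_comm, expect_spin]
  simp only [Finset.sum_const_zero, mul_zero, sub_zero]
  ring

section NeZero

variable [NeZero M] (g : (Fin L → Bool) → ℝ)

lemma expect_window (hLM : L ≤ M) (x : ZMod M) : 𝔼 b, g (window L b x) = 𝔼 w, g w :=
  expect_comp_of_injective (injective_add_natCast hLM x) g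

lemma expect_sum_window_mul_sum_spin (hLM : L ≤ M) :
    𝔼 b : ZMod M → Bool, (∑ x, g (window L b x)) * ∑ y, spin (b y)
      = M * 𝔼 w, g w * ∑ j, spin (w j) := by
  simp_rw [Finset.sum_mul (s := Finset.univ), Finset.expect_sum_comm]
  refine (Finset.sum_congr rfl fun x _ ↦
    expect_comp_mul_sum_spin (injective_add_natCast hLM x) g).trans ?_
  simp

lemma isLocalFamily_window [NeZero L] :
    ∃ K, ∀ M [NeZero M], IsLocalFamily (windowSupport L) (L ^ 2) K
      fun (x : ZMod M) b ↦ g (window L b x) := by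
  obtain ⟨K, hK⟩ := (Set.finite_range fun w ↦ |g w|).bddAbove
  refine ⟨K, fun M _ ↦ ⟨fun x ↦ ?_, fun x ↦ ?_, dependsOn_window g, fun x b ↦ hK ⟨_, rfl⟩⟩⟩
  · exact Finset.mem_image.2 ⟨0, Finset.mem_univ _, by simp⟩
  · have subset : overlaps (windowSupport L) x
        ⊆ Finset.univ.image fun ij : Fin L × Fin L ↦ x + (ij.1 : ℕ) - (ij.2 : ℕ) := by
      intro y hy
      rw [mem_overlaps, Finset.not_disjoint_iff] at hy
      simp only [windowSupport, Finset.mem_image, Finset.mem_univ, true_and] at hy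
      obtain ⟨_, ⟨i, rfl⟩, j, hj⟩ := hy
      exact Finset.mem_image.2 ⟨(i, j), Finset.mem_univ _, by rw [← hj, add_sub_cancel_right]⟩
    refine (Finset.card_le_card subset).trans (Finset.card_image_le.trans ?_)
    simp [sq]

variable {g}

lemma expect_window_mul_sum_window (hg : 𝔼 w, g w = 0) (hLM : 3 * L ≤ M) (x : ZMod M) :
    𝔼 b, g (window L b x) * ∑ y, g (window L b y) = autocovariance g := by
  let near (k : Fin (2 * L)) : ZMod M := x - (L : ℕ) + (k : ℕ)
  have far (y) (hy : y ∉ Finset.univ.image near) :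
      𝔼 b, g (window L b x) * g (window L b y) = 0 := by
    rw [expect_mul_of_dependsOn (dependsOn_window g x), expect_window g (by lia), hg, zero_mul]
    refine fun _ _ hab ↦ dependsOn_window g y fun z hz ↦ hab z fun hz' ↦ hy ?_
    simp only [windowSupport, Finset.coe_image, Finset.coe_univ, Set.image_univ] at hz hz'
    obtain ⟨⟨i, rfl⟩, j, hj⟩ := hz', hz
    refine Finset.mem_image.2 ⟨⟨L + i - j, by lia⟩, Finset.mem_univ _, ?_⟩
    rw [eq_sub_of_add_eq hj]
    simp only [near]
    rw [Nat.cast_sub (by lia), Nat.cast_add]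
    ring
  have read (k : ℕ) (hk : k < 2 * L + 1) (b : ZMod M → Bool) : window L b (x - (L : ℕ) + (k : ℕ))
      = fun j : Fin L ↦ (b ∘ fun i : Fin (3 * L) ↦ x - (L : ℕ) + (i : ℕ)) ⟨k + j, by lia⟩ := by
    funext j
    simp [window, add_assoc]
  rw [autocovariance, ← expect_comp_of_injective (injective_add_natCast hLM (x - (L : ℕ)))]
  simp_rw [← read L (by lia), ← read _ (Fin.is_lt _ |>.trans (Nat.lt_succ_self _)), sub_add_cancel,
    Finset.mul_sum, Finset.expect_sum_comm]
  rw [← Finset.sum_subset (Finset.subset_univ (Finset.univ.image near)) fun y _ hy ↦ far y hy,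
    Finset.sum_image (injective_add_natCast (by lia) _).injOn]

theorem expect_sq_sum_window (hg : 𝔼 w, g w = 0) (hLM : 3 * L ≤ M) :
    𝔼 b : ZMod M → Bool, (∑ x, g (window L b x)) ^ 2 = M * autocovariance g := by
  simp_rw [sq, Finset.sum_mul (s := Finset.univ), Finset.expect_sum_comm,
    expect_window_mul_sum_window hg hLM]
  simp

end NeZero

section Centered

variable [NeZero L] (g : (Fin L → Bool) → ℝ)

lemma sum_centered_window [NeZero M] (b : ZMod M → Bool) :
    ∑ x, centered g (window L b x) = ∑ x, g (window L b x) - M * 𝔼 w, g w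
      - 4 * (𝔼 w, g w * ∑ j, spin (w j)) * ∑ x, spin (b x) := by
  simp [centered, window, Finset.mul_sum]

variable {g}

lemma autocovariance_centered_pos (hg : ∀ w, Finset.card {j | w j} ≤ 1 → g w = 0)
    (hg₀ : 𝔼 w, g w ≠ 0) : 0 < autocovariance (centered g) := by
  have hL := NeZero.pos L
  have : NeZero (3 * L) := ⟨by lia⟩
  have sq_eq := expect_sq_sum_window (M := 3 * L) (expect_centered g) le_rfl
  have nonneg : 0 ≤ autocovariance (centered g) := by
    refine nonneg_of_mul_nonneg_right (sq_eq ▸ Finset.expect_nonneg fun b _ ↦ sq_nonneg _) ?_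
    positivity
  refine nonneg.lt_of_ne fun hv ↦ hg₀ ?_
  rw [← hv, mul_zero, Finset.expect_eq_zero_iff_of_nonneg fun b _ ↦ sq_nonneg _] at sq_eq
  have sum_eq_zero (b : ZMod (3 * L) → Bool) (hb : Finset.card {x | b x} ≤ 1) :
      (3 * L : ℕ) * 𝔼 w, g w + 4 * (𝔼 w, g w * ∑ j, spin (w j)) * ∑ x, spin (b x) = 0 := by
    have h := pow_eq_zero_iff two_ne_zero |>.1 (sq_eq b (Finset.mem_univ b))
    have window_eq_zero (x) : g (window L b x) = 0 := by
      refine hg _ (le_trans ?_ hb)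
      exact Finset.card_le_card_of_injOn (fun j ↦ x + (j : ℕ))
        (fun j hj ↦ by rw [Finset.coe_filter_univ] at hj ⊢; exact hj)
        (injective_add_natCast (by lia) x).injOn
    rw [sum_centered_window, Finset.sum_eq_zero fun x _ ↦ window_eq_zero x] at h
    linarith
  have h₀ := sum_eq_zero (fun _ ↦ false) (by simp)
  have h₁ := sum_eq_zero (fun x ↦ decide (x = 0)) (by simp [Finset.filter_eq'])
  have spin_decide (x : ZMod (3 * L)) :
      spin (decide (x = 0)) = spin false + if x = 0 then 1 else 0 := by
    split_ifs with hx <;> norm_num [hx, spin]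
  simp_rw [spin_decide, Finset.sum_add_distrib, Finset.sum_ite_eq' _ (0 : ZMod (3 * L))] at h₁
  have hc : 𝔼 w, g w * ∑ j, spin (w j) = 0 := by
    simp only [Finset.mem_univ, if_true] at h₁
    linarith
  have : 3 * L ≠ 0 := by lia
  simpa [hc, this, hL.ne'] using h₀

theorem hasGaussianLimit_sum_window :
    HasGaussianLimit (fun n ↦ slice (ZMod (2 * n + 1)) (n + 1))
      (fun n b ↦ ∑ x, g (window L b x) - 2 * (𝔼 w, g w) * n)
      (2 * autocovariance (centered g)) := by
  obtain ⟨K, hK⟩ := isLocalFamily_window (centered g)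
  have large : ∀ᶠ n in atTop, 3 * L ≤ 2 * n + 1 :=
    eventually_atTop.2 ⟨3 * L, fun n hn ↦ by lia⟩
  have limit := IsLocalFamily.hasGaussianLimit_slice (ι := fun n ↦ ZMod (2 * n + 1))
    (fun n ↦ ZMod.card _) (fun n ↦ hK (2 * n + 1))
    (large.mono fun n hn x ↦ by rw [expect_window _ (by lia), expect_centered])
    (large.mono fun n hn ↦ by
      rw [expect_sum_window_mul_sum_spin _ (by lia), expect_centered_mul_sum_spin, mul_zero])
    (large.mono fun n hn ↦ by rw [expect_sq_sum_window (expect_centered g) hn, ZMod.card])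
  refine limit.of_abs_sub_le
    (C := |𝔼 w, g w + 2 * 𝔼 w, g w * ∑ j, spin (w j)|) (fun n b hb ↦ le_of_eq (congrArg _ ?_)) ?_
  · rw [sum_centered_window, sum_spin, mem_slice.1 hb, ZMod.card]
    push_cast
    ring
  · exact fun n ↦ Finset.card_pos.1 (by rw [card_slice, ZMod.card]; exact Nat.choose_pos (by lia))

end Centered

end Window

/-! ### The cycle lemma -/

lemma existsUnique_forall_lt_add (h : ℕ → ℤ) {M : ℕ} (hM : 0 < M) (hh : ∀ k, h (k + M) = h k + 1) :
    ∃! r, r < M ∧ ∀ k ∈ Finset.Icc 1 M, h r < h (r + k) := by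
  -- The increments of `φ` sum to zero over a period, and a good `r` is a minimiser of `φ`.
  let φ (k : ℕ) : ℤ := M * h k - k
  have periodic : Function.Periodic φ M := fun k ↦ by
    simp only [φ, hh]
    push_cast
    ring
  have not_both {i j : ℕ} (hj : j < M) (h_i : ∀ k ∈ Finset.Icc 1 M, h i < h (i + k))
      (h_j : ∀ k ∈ Finset.Icc 1 M, h j < h (j + k)) : ¬i < j := fun hij ↦ by
    have lt_j := h_i (j - i) (Finset.mem_Icc.2 (by lia))
    have lt_i := h_j (M - (j - i)) (Finset.mem_Icc.2 (by lia))
    rw [show i + (j - i) = j by lia] at lt_j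
    rw [show j + (M - (j - i)) = i + M by lia, hh] at lt_i
    lia
  obtain ⟨r, hr, hmin⟩ := (Finset.range M).exists_min_image φ ⟨0, Finset.mem_range.2 hM⟩
  have good (k) (hk : k ∈ Finset.Icc 1 M) : h r < h (r + k) := by
    have le : φ r ≤ φ (r + k) :=
      (hmin _ (Finset.mem_range.2 (Nat.mod_lt _ hM))).trans_eq (periodic.map_mod_nat _)
    have := (Finset.mem_Icc.1 hk).1
    simp only [φ, Nat.cast_add] at le
    nlinarith
  rw [Finset.mem_range] at hr
  exact ⟨r, ⟨hr, good⟩, fun r' ⟨hr', good'⟩ ↦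
    le_antisymm (not_lt.1 (not_both hr' good good')) (not_lt.1 (not_both hr good' good))⟩

section Rotation

variable {M : ℕ}

/-- The cyclic word `b` read from position `r` on. -/
def rotate (r : ZMod M) (b : ZMod M → Bool) : ZMod M → Bool := fun x ↦ b (x + r)

/-- The number of letters `true` minus the number of letters `false` among the letters of `b` at
`0, …, k - 1`. -/
def height (b : ZMod M → Bool) (k : ℕ) : ℤ := 2 * Nat.count (fun j ↦ b (j : ZMod M)) k - k

lemma rotate_rotate (r r' : ZMod M) (b : ZMod M → Bool) :
    rotate r (rotate r' b) = rotate (r + r') b := by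
  funext x
  simp [rotate, add_assoc]

lemma rotate_zero (b : ZMod M → Bool) : rotate 0 b = b := by
  funext x
  simp [rotate]

lemma height_add (b : ZMod M → Bool) (r k : ℕ) :
    height b (r + k) = height b r + height (rotate r b) k := by
  simp only [height, rotate, Nat.count_add, Nat.cast_add, add_comm _ (r : ZMod M)]
  ring

variable [NeZero M]

lemma count_natCast_self (b : ZMod M → Bool) :
    Nat.count (fun j ↦ b (j : ZMod M)) M = Finset.card {x | b x} := by
  rw [Nat.count_eq_card_filter_range]
  refine Finset.card_nbij' Nat.cast ZMod.val ?_ ?_ ?_ ?_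
  · intro j
    simp
  · intro x
    simp [ZMod.val_lt]
  · intro j hj
    exact ZMod.val_cast_of_lt (Finset.mem_range.1 (Finset.mem_filter.1 hj).1)
  · intro x _
    exact ZMod.natCast_zmod_val x

lemma rotate_mem_slice {k : ℕ} {b : ZMod M → Bool} (hb : b ∈ slice (ZMod M) k) (r : ZMod M) :
    rotate r b ∈ slice (ZMod M) k := by
  rw [mem_slice] at hb ⊢
  rw [← hb]
  exact Finset.card_equiv (Equiv.addRight r) fun x ↦ by
    simp only [Finset.mem_filter_univ]
    rfl

lemma sum_window_rotate {L : ℕ} (g : (Fin L → Bool) → ℝ) (r : ZMod M) (b : ZMod M → Bool) :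
    ∑ x, g (window L (rotate r b) x) = ∑ x, g (window L b x) :=
  Fintype.sum_equiv (Equiv.addRight r) _ _ fun _ ↦ congrArg g <| funext fun _ ↦
    congrArg b (add_right_comm _ _ _)

end Rotation

/-- The cyclic words with one more letter `true` than letters `false` that, read from position
`0` on, have positive height after each letter. -/
def dyckWords (n : ℕ) : Finset (ZMod (2 * n + 1) → Bool) :=
  {b ∈ slice (ZMod (2 * n + 1)) (n + 1) | ∀ k ∈ Finset.Icc 1 (2 * n + 1), 0 < height b k}

lemma mem_dyckWords {n : ℕ} {b : ZMod (2 * n + 1) → Bool} : b ∈ dyckWords n ↔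
    b ∈ slice (ZMod (2 * n + 1)) (n + 1) ∧ ∀ k ∈ Finset.Icc 1 (2 * n + 1), 0 < height b k :=
  Finset.mem_filter

lemma existsUnique_rotate_mem_dyckWords {n : ℕ} {b : ZMod (2 * n + 1) → Bool}
    (hb : b ∈ slice (ZMod (2 * n + 1)) (n + 1)) : ∃! r, rotate r b ∈ dyckWords n := by
  have rotate_mem_iff (r : ℕ) : rotate (r : ZMod (2 * n + 1)) b ∈ dyckWords n
      ↔ ∀ k ∈ Finset.Icc 1 (2 * n + 1), height b r < height b (r + k) := by
    simp only [mem_dyckWords, rotate_mem_slice hb, true_and, height_add, lt_add_iff_pos_right]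
  have height_period (k : ℕ) : height b (k + (2 * n + 1)) = height b k + 1 := by
    rw [height_add, height.eq_def (rotate _ b), count_natCast_self,
      mem_slice.1 (rotate_mem_slice hb _)]
    push_cast
    ring
  obtain ⟨r, ⟨-, hr⟩, unique⟩ := existsUnique_forall_lt_add _ (by lia) height_period
  refine ⟨r, (rotate_mem_iff r).2 hr, fun r' hr' ↦ ?_⟩
  rw [← ZMod.natCast_zmod_val r'] at hr' ⊢
  rw [unique _ ⟨r'.val_lt, (rotate_mem_iff _).1 hr'⟩]

lemma dyckWords_nonempty (n : ℕ) : (dyckWords n).Nonempty := by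
  have : (slice (ZMod (2 * n + 1)) (n + 1)).Nonempty :=
    Finset.card_pos.1 (by rw [card_slice, ZMod.card]; exact Nat.choose_pos (by lia))
  exact ⟨_, (existsUnique_rotate_mem_dyckWords this.choose_spec).choose_spec.1⟩

theorem expect_dyckWords {n : ℕ} {𝕜 : Type*} [Field 𝕜] [CharZero 𝕜]
    {G : (ZMod (2 * n + 1) → Bool) → 𝕜} (hG : ∀ r b, G (rotate r b) = G b) :
    𝔼 b ∈ dyckWords n, G b = 𝔼 b ∈ slice (ZMod (2 * n + 1)) (n + 1), G b := by
  calc 𝔼 b ∈ dyckWords n, G b = 𝔼 q ∈ Finset.univ ×ˢ dyckWords n, G (rotate q.1 q.2) := by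
        simp [Finset.expect_product, hG]
    _ = 𝔼 b ∈ slice (ZMod (2 * n + 1)) (n + 1), G b := by
        refine Finset.expect_nbij (fun q ↦ rotate q.1 q.2) ?_ (fun _ _ ↦ rfl) ?_ ?_
        · rintro ⟨r, b⟩ hb
          exact rotate_mem_slice (mem_dyckWords.1 (Finset.mem_product.1 hb).2).1 r
        · rintro ⟨r, b⟩ hb ⟨r', b'⟩ hb' heq
          simp only [Finset.coe_product, Set.mem_prod, Finset.mem_coe] at hb hb' heq
          have hr : -r = -r' := by
            refine (existsUnique_rotate_mem_dyckWords
              (rotate_mem_slice (mem_dyckWords.1 hb.2).1 r)).unique ?_ ?_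
            · simpa [rotate_rotate, rotate_zero] using hb.2
            · simpa [heq, rotate_rotate, rotate_zero] using hb'.2
          obtain rfl := neg_injective hr
          exact Prod.ext rfl <| by
            simpa [rotate_rotate, rotate_zero] using congrArg (rotate (-r)) heq
        · intro b hb
          obtain ⟨r, hr, -⟩ := existsUnique_rotate_mem_dyckWords hb
          exact ⟨(-r, rotate r b), by simpa using hr, by simp [rotate_rotate, rotate_zero]⟩

/-! ### Words and their sequences of steps -/

lemma nth_count_add_eq {p : ℕ → Prop} [DecidablePred p] {f : ℕ → ℕ} {a n : ℕ}
    (hf : StrictMonoOn f (Set.Iic n)) (hp : ∀ c ≤ f n, p (a + c) ↔ ∃ i ≤ n, f i = c) {i : ℕ}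
    (hi : i ≤ n) : Nat.nth p (Nat.count p a + i) = a + f i := by
  have le_last {j} (hj : j ≤ n) : f j ≤ f n := hf.monotoneOn hj Set.self_mem_Iic hj
  have count_eq : Nat.count (fun c ↦ p (a + c)) (f i) = i := by
    have filter_eq : {c ∈ Finset.range (f i) | p (a + c)} = (Finset.range i).image f := by
      ext c
      simp only [Finset.mem_filter, Finset.mem_range, Finset.mem_image]
      refine ⟨fun ⟨hci, hc⟩ ↦ ?_, ?_⟩
      · obtain ⟨j, hj, rfl⟩ := (hp c (hci.le.trans (le_last hi))).1 hc
        exact ⟨j, (hf.lt_iff_lt hj hi).1 hci, rfl⟩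
      · rintro ⟨j, hj, rfl⟩
        exact ⟨hf (hj.le.trans hi) hi hj, (hp _ (le_last (hj.le.trans hi))).2 ⟨j, by lia, rfl⟩⟩
    rw [Nat.count_eq_card_filter_range, filter_eq, Finset.card_image_of_injOn, Finset.card_range]
    exact hf.injOn.mono fun j hj ↦ (Finset.mem_range.1 hj).le.trans hi
  rw [← Nat.nth_count ((hp _ (le_last hi)).2 ⟨i, hi, rfl⟩), Nat.count_add, count_eq]

/-- A step `s i` of a Łukasiewicz path is encoded by a letter `true` followed by `1 - s i` letters
`false`; this is the position of the `k`-th letter `true` of the resulting word. -/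
def stepTime (s : ℕ → ℤ) (k : ℕ) : ℕ := (2 * k - ∑ i ∈ Finset.range k, s i).toNat

section StepTime

variable {m : ℕ} {ω : ℕ → ℤ}

lemma IsLukaSteps.isPattern {n : ℕ} {s : ℕ → ℤ} (hs : IsLukaSteps n s) : IsPattern n s := hs.2

lemma stepTime_zero (ω : ℕ → ℤ) : stepTime ω 0 = 0 := by simp [stepTime]

namespace IsPattern

variable (hω : IsPattern m ω)
include hω

lemma natCast_stepTime {k : ℕ} (hk : k ≤ m) :
    (stepTime ω k : ℤ) = 2 * k - ∑ i ∈ Finset.range k, ω i := by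
  have : ∑ i ∈ Finset.range k, ω i ≤ (Finset.range k).card • 1 :=
    Finset.sum_le_card_nsmul _ _ _ fun i hi ↦ hω.1 i ((Finset.mem_range.1 hi).trans_le hk)
  rw [Finset.card_range, nsmul_one] at this
  exact Int.toNat_of_nonneg (by lia)

lemma stepTime_succ {k : ℕ} (hk : k < m) : (stepTime ω (k + 1) : ℤ) = stepTime ω k + 2 - ω k := by
  rw [hω.natCast_stepTime hk, hω.natCast_stepTime hk.le, Finset.sum_range_succ]
  push_cast
  ring

lemma strictMonoOn_stepTime : StrictMonoOn (stepTime ω) (Set.Iic m) :=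
  strictMonoOn_Iic_of_lt_succ fun k hk ↦ by
    have := hω.stepTime_succ hk
    have := hω.1 k hk
    rw [Order.succ_eq_add_one]
    lia

lemma stepTime_lt {k : ℕ} (hk : 1 ≤ k) (hkm : k ≤ m) : stepTime ω k < 2 * k := by
  have := hω.natCast_stepTime hkm
  have := hω.2 k hk hkm
  lia

end IsPattern

end StepTime

section UpTime

variable {M : ℕ}

/-- The position of the `k`-th letter `true` of the cyclic word `b`, unrolled from `0` on. -/
def upTime (b : ZMod M → Bool) (k : ℕ) : ℕ := Nat.nth (fun j ↦ b (j : ZMod M)) k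

/-- The step encoded by the `k`-th letter `true` of `b` and the letters `false` following it. -/
def blockStep (b : ZMod M → Bool) (k : ℕ) : ℤ := 2 - (upTime b (k + 1) - upTime b k)

lemma sum_blockStep (b : ZMod M → Bool) (k l : ℕ) :
    ∑ i ∈ Finset.range l, blockStep b (k + i) = 2 * l - (upTime b (k + l) - upTime b k) := by
  let f (i : ℕ) : ℤ := 2 * i - upTime b (k + i)
  have blockStep_eq (i : ℕ) : blockStep b (k + i) = f (i + 1) - f i := by
    simp only [f, blockStep, add_assoc]
    push_cast
    ring
  simp_rw [blockStep_eq, Finset.sum_range_sub, f]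
  simp
  ring

variable {b : ZMod M → Bool}

lemma exists_upTime_eq {j : ℕ} (hj : b (j : ZMod M)) : ∃ k, upTime b k = j :=
  ⟨_, Nat.nth_count (p := fun j : ℕ ↦ (b (j : ZMod M) : Prop)) hj⟩

variable [NeZero M]

variable (hb : ∃ x, b x)
include hb

lemma infinite_setOf_natCast : (Set.ofPred fun j : ℕ ↦ (b (j : ZMod M) : Prop)).Infinite := by
  obtain ⟨x, hx⟩ := hb
  refine Set.infinite_of_forall_exists_gt fun N ↦ ⟨x.val + M * (N + 1), by simpa using hx, ?_⟩
  have := NeZero.pos M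
  nlinarith

lemma upTime_strictMono : StrictMono (upTime b) := Nat.nth_strictMono (infinite_setOf_natCast hb)

lemma apply_upTime (k : ℕ) : b (upTime b k : ZMod M) :=
  Nat.nth_mem_of_infinite (infinite_setOf_natCast hb) k

lemma count_upTime (k : ℕ) : Nat.count (fun j ↦ b (j : ZMod M)) (upTime b k) = k :=
  Nat.count_nth_of_infinite (infinite_setOf_natCast hb) k

lemma lt_count_iff_upTime_lt {k j : ℕ} :
    k < Nat.count (fun j ↦ b (j : ZMod M)) j ↔ upTime b k < j :=
  Nat.lt_nth_iff_count_lt (infinite_setOf_natCast hb)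

lemma blockStep_le_one (k : ℕ) : blockStep b k ≤ 1 := by
  have := upTime_strictMono hb (Nat.lt_add_one k)
  rw [blockStep]
  lia

end UpTime

/-- The word with letters `true` exactly at the times `stepTime s 0, …, stepTime s m`. -/
def stepWord (m : ℕ) (s : ℕ → ℤ) (j : ℕ) : Bool := decide (∃ k ≤ m, stepTime s k = j)

section Dyck

variable {n : ℕ} {b : ZMod (2 * n + 1) → Bool}

/-- The Łukasiewicz path of length `n` encoded by the cyclic word `b`. -/
def pathSteps (b : ZMod (2 * n + 1) → Bool) (i : ℕ) : ℤ := if i < n then blockStep b i else 0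

lemma exists_apply_of_mem_slice (hb : b ∈ slice (ZMod (2 * n + 1)) (n + 1)) : ∃ x, b x := by
  obtain ⟨x, hx⟩ : ({x | b x} : Finset (ZMod (2 * n + 1))).Nonempty :=
    Finset.card_pos.1 (by rw [mem_slice.1 hb]; lia)
  exact ⟨x, (Finset.mem_filter.1 hx).2⟩

lemma le_iff_upTime_lt (hb : b ∈ slice (ZMod (2 * n + 1)) (n + 1)) {k : ℕ} :
    k ≤ n ↔ upTime b k < 2 * n + 1 := by
  rw [← lt_count_iff_upTime_lt (exists_apply_of_mem_slice hb), count_natCast_self, mem_slice.1 hb,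
    Nat.lt_succ_iff]

lemma apply_iff_exists_upTime_eq (hb : b ∈ slice (ZMod (2 * n + 1)) (n + 1))
    (x : ZMod (2 * n + 1)) : b x ↔ ∃ k ≤ n, upTime b k = x.val := by
  constructor
  · intro hx
    obtain ⟨k, hk⟩ := exists_upTime_eq (b := b) (j := x.val) (by simpa using hx)
    exact ⟨k, (le_iff_upTime_lt hb).2 (hk ▸ x.val_lt), hk⟩
  · rintro ⟨k, -, hk⟩
    simpa [hk] using apply_upTime (exists_apply_of_mem_slice hb) k

lemma mem_dyckWords_iff_upTime_lt (hb : b ∈ slice (ZMod (2 * n + 1)) (n + 1)) :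
    b ∈ dyckWords n ↔ b 0 ∧ ∀ k ∈ Finset.Icc 1 n, upTime b k < 2 * k := by
  have hb' := exists_apply_of_mem_slice hb
  rw [mem_dyckWords, and_iff_right hb]
  simp only [height, Finset.mem_Icc]
  constructor
  · refine fun h ↦ ⟨?_, fun k ⟨hk, hkn⟩ ↦ ?_⟩
    · have := h 1 (by lia)
      by_contra h₀
      simp [Nat.count_succ, h₀] at this
    · have := h (upTime b k) ⟨hk.trans (upTime_strictMono hb').le_apply,
        ((le_iff_upTime_lt hb).1 hkn).le⟩
      rw [count_upTime hb'] at this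
      lia
  · rintro ⟨h₀, h⟩ c ⟨hc, hcM⟩
    have upTime_zero : upTime b 0 = 0 := Nat.nth_zero_of_zero (by simpa using h₀)
    have pos := (lt_count_iff_upTime_lt hb').2 (by rw [upTime_zero]; exact hc)
    have le : c ≤ upTime b (Nat.count (fun j ↦ b (j : ZMod (2 * n + 1))) c) :=
      not_lt.1 fun hlt ↦ lt_irrefl _ ((lt_count_iff_upTime_lt hb').2 hlt)
    have := h (Nat.count (fun j ↦ b (j : ZMod (2 * n + 1))) c)
    lia

lemma upTime_zero_of_mem_dyckWords (hb : b ∈ dyckWords n) : upTime b 0 = 0 :=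
  Nat.nth_zero_of_zero (by
    simpa using ((mem_dyckWords_iff_upTime_lt (mem_dyckWords.1 hb).1).1 hb).1)

lemma sum_pathSteps (hb : b ∈ dyckWords n) {k : ℕ} (hk : k ≤ n) :
    ∑ i ∈ Finset.range k, pathSteps b i = 2 * k - upTime b k := by
  have pathSteps_eq : ∀ i ∈ Finset.range k, pathSteps b i = blockStep b (0 + i) := fun i hi ↦ by
    rw [pathSteps, if_pos ((Finset.mem_range.1 hi).trans_le hk), zero_add]
  rw [Finset.sum_congr rfl pathSteps_eq, sum_blockStep, upTime_zero_of_mem_dyckWords hb, zero_add,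
    Nat.cast_zero, sub_zero]

lemma stepTime_pathSteps (hb : b ∈ dyckWords n) {k : ℕ} (hk : k ≤ n) :
    stepTime (pathSteps b) k = upTime b k := by
  simp [stepTime, sum_pathSteps hb hk]

lemma isLukaSteps_pathSteps (hb : b ∈ dyckWords n) : IsLukaSteps n (pathSteps b) := by
  have hb' := (mem_dyckWords.1 hb).1
  refine ⟨fun i hi ↦ if_neg hi.not_gt, fun i hi ↦ ?_, fun k hk hkn ↦ ?_⟩
  · rw [pathSteps, if_pos hi]
    exact blockStep_le_one (exists_apply_of_mem_slice hb') i
  · have := ((mem_dyckWords_iff_upTime_lt hb').1 hb).2 k (Finset.mem_Icc.2 ⟨hk, hkn⟩)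
    rw [sum_pathSteps hb hkn]
    lia

lemma injOn_pathSteps : Set.InjOn pathSteps (dyckWords n : Set (ZMod (2 * n + 1) → Bool)) := by
  intro b hb b' hb' h
  funext x
  rw [Bool.eq_iff_iff, apply_iff_exists_upTime_eq (mem_dyckWords.1 hb).1,
    apply_iff_exists_upTime_eq (mem_dyckWords.1 hb').1]
  refine exists_congr fun k ↦ and_congr_right fun hk ↦ ?_
  rw [← stepTime_pathSteps hb hk, h, stepTime_pathSteps hb' hk]

/-- The cyclic word encoding the Łukasiewicz path with steps `s`. -/
def wordOfSteps (n : ℕ) (s : ℕ → ℤ) (x : ZMod (2 * n + 1)) : Bool := stepWord n s x.val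

section WordOfSteps

variable {s : ℕ → ℤ} (hs : IsLukaSteps n s)
include hs

lemma stepTime_lt_of_isLukaSteps {k : ℕ} (hk : k ≤ n) : stepTime s k < 2 * n + 1 := by
  obtain rfl | hk₀ := k.eq_zero_or_pos
  · rw [stepTime_zero]
    lia
  · have := hs.isPattern.stepTime_lt hk₀ hk
    lia

lemma upTime_wordOfSteps {k : ℕ} (hk : k ≤ n) : upTime (wordOfSteps n s) k = stepTime s k := by
  have := nth_count_add_eq (p := fun j : ℕ ↦ wordOfSteps n s (j : ZMod (2 * n + 1))) (a := 0)
    hs.isPattern.strictMonoOn_stepTime (fun c hc ↦ ?_) hk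
  · simpa [upTime] using this
  · rw [zero_add, wordOfSteps, stepWord, decide_eq_true_iff,
      ZMod.val_cast_of_lt (hc.trans_lt (stepTime_lt_of_isLukaSteps hs le_rfl))]

lemma wordOfSteps_mem_dyckWords : wordOfSteps n s ∈ dyckWords n := by
  have le_of_mem {k : ℕ} (hk : k ∈ (Finset.range (n + 1) : Set ℕ)) : k ≤ n :=
    Finset.mem_range_succ_iff.1 hk
  have val_stepTime {k : ℕ} (hk : k ∈ (Finset.range (n + 1) : Set ℕ)) :
      (stepTime s k : ZMod (2 * n + 1)).val = stepTime s k :=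
    ZMod.val_cast_of_lt (stepTime_lt_of_isLukaSteps hs (le_of_mem hk))
  have mem_slice : wordOfSteps n s ∈ slice (ZMod (2 * n + 1)) (n + 1) := by
    rw [mem_slice, ← Finset.card_range (n + 1)]
    symm
    refine Finset.card_nbij (fun k ↦ (stepTime s k : ZMod (2 * n + 1))) ?_ ?_ ?_
    · exact fun k hk ↦ Finset.mem_coe.2 <| Finset.mem_filter.2 ⟨Finset.mem_univ _,
        decide_eq_true ⟨k, le_of_mem hk, (val_stepTime hk).symm⟩⟩
    · intro k hk l hl hkl
      refine hs.isPattern.strictMonoOn_stepTime.injOn (le_of_mem hk) (le_of_mem hl) ?_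
      rw [← val_stepTime hk, ← val_stepTime hl]
      exact congrArg ZMod.val hkl
    · intro x hx
      obtain ⟨k, hk, hkx⟩ := of_decide_eq_true (Finset.mem_filter.1 hx).2
      exact ⟨k, Finset.mem_coe.2 (Finset.mem_range_succ_iff.2 hk), by simp [hkx]⟩
  rw [mem_dyckWords_iff_upTime_lt mem_slice]
  refine ⟨?_, fun k hk ↦ ?_⟩
  · simp only [wordOfSteps, stepWord, ZMod.val_zero, decide_eq_true_iff]
    exact ⟨0, n.zero_le, stepTime_zero s⟩
  · rw [Finset.mem_Icc] at hk
    rw [upTime_wordOfSteps hs hk.2]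
    exact hs.isPattern.stepTime_lt hk.1 hk.2

lemma pathSteps_wordOfSteps : pathSteps (wordOfSteps n s) = s := by
  funext i
  rw [pathSteps]
  split_ifs with hi
  · have := hs.isPattern.stepTime_succ hi
    rw [blockStep, upTime_wordOfSteps hs hi, upTime_wordOfSteps hs hi.le]
    lia
  · exact (hs.1 i (not_lt.1 hi)).symm

end WordOfSteps

theorem bijOn_pathSteps (n : ℕ) :
    Set.BijOn pathSteps (dyckWords n : Set (ZMod (2 * n + 1) → Bool)) {s | IsLukaSteps n s} :=
  ⟨fun _ ↦ isLukaSteps_pathSteps, injOn_pathSteps, fun s hs ↦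
    ⟨wordOfSteps n s, wordOfSteps_mem_dyckWords hs, pathSteps_wordOfSteps hs⟩⟩

end Dyck

/-! ### Occurrences of a pattern -/

/-- The word encoding the first `m` steps of `ω`, up to the beginning of the step `ω m`. -/
def patternWord (m : ℕ) (ω : ℕ → ℤ) (j : Fin (stepTime ω m + 1)) : Bool := stepWord m ω j

/-- The indicator function of the word encoding the pattern `ω` of length `m`. -/
def patternIndicator (m : ℕ) (ω : ℕ → ℤ) (w : Fin (stepTime ω m + 1) → Bool) : ℝ :=
  if w = patternWord m ω then 1 else 0

lemma stepWord_stepTime (ω : ℕ → ℤ) {i m : ℕ} (hi : i ≤ m) : stepWord m ω (stepTime ω i) :=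
  decide_eq_true ⟨i, hi, rfl⟩

lemma stepWord_zero (m : ℕ) (ω : ℕ → ℤ) : stepWord m ω 0 :=
  decide_eq_true ⟨0, m.zero_le, stepTime_zero ω⟩

section Occurrences

variable {m : ℕ} {ω : ℕ → ℤ}

lemma expect_patternIndicator_pos (m : ℕ) (ω : ℕ → ℤ) : 0 < 𝔼 w, patternIndicator m ω w := by
  simp [patternIndicator]

lemma patternIndicator_eq_zero (hm : 1 ≤ m) (hω : IsPattern m ω)
    {w : Fin (stepTime ω m + 1) → Bool} (hw : Finset.card {j | w j} ≤ 1) :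
    patternIndicator m ω w = 0 := by
  refine if_neg ?_
  rintro rfl
  have stepTime_pos : stepTime ω 0 < stepTime ω m :=
    hω.strictMonoOn_stepTime m.zero_le Set.self_mem_Iic hm
  refine stepTime_pos.ne ?_
  rw [stepTime_zero]
  exact congrArg Fin.val <| Finset.card_le_one.1 hw 0
    (Finset.mem_filter.2 ⟨Finset.mem_univ _, stepWord_zero m ω⟩) (Fin.last _)
    (Finset.mem_filter.2 ⟨Finset.mem_univ _, stepWord_stepTime ω le_rfl⟩)

section Window

variable (hω : IsPattern m ω)
include hω

lemma forall_blockStep_eq_iff {M : ℕ} {b : ZMod M → Bool} {k : ℕ} :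
    (∀ j < m, blockStep b (k + j) = ω j) ↔
      ∀ i ≤ m, upTime b (k + i) = upTime b k + stepTime ω i := by
  constructor
  · intro h i hi
    have sum_eq := sum_blockStep b k i
    rw [Finset.sum_congr rfl fun j hj ↦ h j ((Finset.mem_range.1 hj).trans_le hi)] at sum_eq
    have := hω.natCast_stepTime hi
    lia
  · intro h j hj
    have := hω.stepTime_succ hj
    rw [blockStep, add_assoc, h _ hj, h _ hj.le]
    lia

lemma window_upTime_eq_iff {M : ℕ} [NeZero M] {b : ZMod M → Bool} (hb : ∃ x, b x) {k : ℕ} :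
    window (stepTime ω m + 1) b (upTime b k) = patternWord m ω ↔
      ∀ j < m, blockStep b (k + j) = ω j := by
  rw [forall_blockStep_eq_iff hω]
  constructor
  · intro h i hi
    have := nth_count_add_eq (p := fun j : ℕ ↦ b (j : ZMod M)) (a := upTime b k)
      hω.strictMonoOn_stepTime (fun c hc ↦ ?_) hi
    · rwa [count_upTime hb] at this
    · have apply_eq : b (upTime b k + c) = stepWord m ω c :=
        congrFun h ⟨c, Nat.lt_succ_of_le hc⟩
      rw [Nat.cast_add, apply_eq, stepWord, decide_eq_true_iff]
  · intro upTime_add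
    funext c
    rw [window, Bool.eq_iff_iff, patternWord, stepWord, decide_eq_true_iff, ← Nat.cast_add]
    constructor
    · intro hc
      obtain ⟨l, hl⟩ := exists_upTime_eq hc
      obtain ⟨i, rfl⟩ := Nat.exists_eq_add_of_le
        ((upTime_strictMono hb).le_iff_le.1 (hl ▸ Nat.le_add_right _ _))
      have hi : i ≤ m := by
        have := (upTime_strictMono hb).le_iff_le (a := k + i) (b := k + m)
        rw [upTime_add m le_rfl] at this
        lia
      exact ⟨i, hi, by rw [upTime_add i hi] at hl; lia⟩
    · rintro ⟨i, hi, hic⟩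
      rw [← hic, ← upTime_add i hi]
      exact apply_upTime hb _

end Window

variable {n : ℕ} {b : ZMod (2 * n + 1) → Bool}

lemma sum_patternIndicator (hω : IsPattern m ω) (hb : b ∈ slice (ZMod (2 * n + 1)) (n + 1)) :
    ∑ x, patternIndicator m ω (window _ b x) =
      Finset.card {k ∈ Finset.range (n + 1) | ∀ j < m, blockStep b (k + j) = ω j} := by
  have hb' := exists_apply_of_mem_slice hb
  have val_upTime {k : ℕ} (hk : k ∈ Finset.range (n + 1)) :
      (upTime b k : ZMod (2 * n + 1)).val = upTime b k :=
    ZMod.val_cast_of_lt ((le_iff_upTime_lt hb).1 (Finset.mem_range_succ_iff.1 hk))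
  simp only [patternIndicator, Finset.sum_boole]
  rw [Nat.cast_inj]
  symm
  refine Finset.card_nbij (fun k ↦ (upTime b k : ZMod (2 * n + 1))) ?_ ?_ ?_
  · intro k hk
    exact Finset.mem_coe.2 <| Finset.mem_filter.2 ⟨Finset.mem_univ _,
      (window_upTime_eq_iff hω hb').2 (Finset.mem_filter.1 hk).2⟩
  · intro k hk l hl hkl
    refine (upTime_strictMono hb').injective ?_
    rw [← val_upTime (Finset.mem_filter.1 hk).1, ← val_upTime (Finset.mem_filter.1 hl).1]
    exact congrArg ZMod.val hkl
  · intro x hx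
    have hx := (Finset.mem_filter.1 hx).2
    have apply_eq : b (x + (0 : ℕ)) = stepWord m ω 0 := congrFun hx 0
    rw [Nat.cast_zero, add_zero] at apply_eq
    obtain ⟨k, hk, hkx⟩ := (apply_iff_exists_upTime_eq hb x).1 (apply_eq.trans (stepWord_zero m ω))
    have cast_eq : (upTime b k : ZMod (2 * n + 1)) = x := by simp [hkx]
    rw [← cast_eq, window_upTime_eq_iff hω hb'] at hx
    exact ⟨k, Finset.mem_coe.2 (Finset.mem_filter.2 ⟨Finset.mem_range_succ_iff.2 hk, hx⟩), cast_eq⟩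

lemma occCount_pathSteps (m : ℕ) (ω : ℕ → ℤ) (b : ZMod (2 * n + 1) → Bool) :
    occCount m ω n (pathSteps b) = Finset.card {k ∈ {k ∈ Finset.range (n + 1) |
      ∀ j < m, blockStep b (k + j) = ω j} | k + m ≤ n} := by
  rw [occCount]
  refine Nat.subtype_card _ fun k ↦ ?_
  simp only [Finset.mem_filter, Finset.mem_range_succ_iff, and_comm (b := k + m ≤ n)]
  refine and_congr_right fun hk ↦ ?_
  rw [and_iff_right (by lia)]
  refine forall₂_congr fun j hj ↦ ?_
  rw [pathSteps, if_pos (by lia)]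

lemma abs_occCount_sub_le (hω : IsPattern m ω) (hb : b ∈ slice (ZMod (2 * n + 1)) (n + 1)) :
    |occCount m ω n (pathSteps b) - ∑ x, patternIndicator m ω (window _ b x)| ≤ m := by
  rw [occCount_pathSteps, sum_patternIndicator hω hb,
    ← Finset.card_filter_add_card_filter_not (s := {k ∈ Finset.range (n + 1) | _})
      (fun k ↦ k + m ≤ n), Nat.cast_add, sub_add_cancel_left, abs_neg, Nat.abs_cast, Nat.cast_le]
  calc _ ≤ (Finset.Ico (n + 1 - m) (n + 1)).card := Finset.card_le_card fun k ↦ by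
        simp only [Finset.mem_filter, Finset.mem_range, Finset.mem_Ico]
        lia
    _ ≤ m := by
        rw [Nat.card_Ico]
        lia

end Occurrences

/-! ### Consequences of a Gaussian limit -/

/-- The law of `Z a` for `a` uniform on `s`. -/
def empiricalMeasure {Ω : Type*} (s : Finset Ω) (Z : Ω → ℝ) : Measure ℝ :=
  (s.card : ENNReal)⁻¹ • ∑ a ∈ s, Measure.dirac (Z a)

section EmpiricalMeasure

variable {Ω : Type*} {s : Finset Ω}

lemma isProbabilityMeasure_empiricalMeasure (hs : s.Nonempty) (Z : Ω → ℝ) :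
    IsProbabilityMeasure (empiricalMeasure s Z) := by
  constructor
  simpa [empiricalMeasure] using
    ENNReal.inv_mul_cancel (by simpa using hs.ne_empty) (ENNReal.natCast_ne_top s.card)

lemma charFun_empiricalMeasure (s : Finset Ω) (Z : Ω → ℝ) (t : ℝ) :
    charFun (empiricalMeasure s Z) t = 𝔼 a ∈ s, Complex.exp ((t * Z a : ℝ) * I) := by
  rw [charFun_apply_real, empiricalMeasure, integral_smul_measure,
    integral_finsetSum_measure fun _ _ ↦ integrable_dirac (by simp), Finset.expect_eq_sum_div_card]
  simp [div_eq_inv_mul]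

lemma empiricalMeasure_real_Iic (s : Finset Ω) (Z : Ω → ℝ) (x : ℝ) :
    (empiricalMeasure s Z).real (Set.Iic x) = Finset.card {a ∈ s | Z a ≤ x} / s.card := by
  simp [empiricalMeasure, Measure.real, Set.indicator_apply, div_eq_inv_mul]

end EmpiricalMeasure

lemma gaussianReal_real_Iic (x : ℝ) : (ProbabilityTheory.gaussianReal 0 1).real (Set.Iic x) =
    (√(2 * Real.pi))⁻¹ * ∫ t in Set.Iic x, Real.exp (-t ^ 2 / 2) := by
  rw [Measure.real, ProbabilityTheory.gaussianReal_apply_eq_integral 0 one_ne_zero,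
    ENNReal.toReal_ofReal
      (integral_nonneg fun _ ↦ ProbabilityTheory.gaussianPDFReal_nonneg 0 1 _)]
  simp [ProbabilityTheory.gaussianPDFReal, integral_const_mul]

lemma tendsto_card_le_div_card {Ω : ℕ → Type*} {s : ∀ n, Finset (Ω n)} {Z : ∀ n, Ω n → ℝ}
    (hs : ∀ n, (s n).Nonempty)
    (hZ : ∀ t : ℝ, Tendsto (fun n ↦ 𝔼 a ∈ s n, Complex.exp ((t * Z n a : ℝ) * I)) atTop
      (nhds (Real.exp (-t ^ 2 / 2) : ℂ))) (x : ℝ) :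
    Tendsto (fun n ↦ (Finset.card {a ∈ s n | Z n a ≤ x} / (s n).card : ℝ)) atTop
      (nhds ((√(2 * Real.pi))⁻¹ * ∫ t in Set.Iic x, Real.exp (-t ^ 2 / 2))) := by
  let law (n : ℕ) : ProbabilityMeasure ℝ :=
    ⟨empiricalMeasure (s n) (Z n), isProbabilityMeasure_empiricalMeasure (hs n) (Z n)⟩
  let gaussian : ProbabilityMeasure ℝ := ⟨ProbabilityTheory.gaussianReal 0 1, inferInstance⟩
  have tendsto_law : Tendsto law atTop (nhds gaussian) := by
    refine ProbabilityMeasure.tendsto_iff_tendsto_charFun.2 fun t ↦ ?_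
    have charFun_gaussian : charFun (gaussian : Measure ℝ) t = (Real.exp (-t ^ 2 / 2) : ℂ) := by
      simp [gaussian, ProbabilityTheory.charFun_gaussianReal, neg_div]
    rw [charFun_gaussian]
    exact (hZ t).congr fun n ↦ (charFun_empiricalMeasure (s n) (Z n) t).symm
  have null_frontier : (gaussian : Measure ℝ) (frontier (Set.Iic x)) = 0 := by
    rw [frontier_Iic]
    exact (ProbabilityTheory.nullSingletonClass_gaussianReal one_ne_zero).measure_singleton x
  rw [← gaussianReal_real_Iic]
  refine ((ENNReal.tendsto_toReal (measure_ne_top (gaussian : Measure ℝ) _)).comp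
    (ProbabilityMeasure.tendsto_measure_of_null_frontier_of_tendsto' tendsto_law
      null_frontier)).congr fun n ↦ ?_
  exact empiricalMeasure_real_Iic (s n) (Z n) x

namespace HasGaussianLimit

variable {Ω : ℕ → Type*} {s : ∀ n, Finset (Ω n)} {X : ∀ n, Ω n → ℝ} {μ v : ℝ}
  (h : HasGaussianLimit s (fun n a ↦ X n a - μ * n) v) (hs : ∀ n, (s n).Nonempty)
include h hs

lemma tendsto_expect_div : Tendsto (fun n : ℕ ↦ (𝔼 a ∈ s n, X n a) / n) atTop (nhds μ) := by
  have := (h.mean.mul (tendsto_div_sqrt_natCast 1)).add_const μ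
  rw [zero_mul, zero_add] at this
  refine this.congr' ((eventually_ge_atTop 1).mono fun n hn ↦ ?_)
  have hn : (0 : ℝ) < n := by exact_mod_cast hn
  rw [div_mul_div_comm, Real.mul_self_sqrt hn.le, Finset.expect_sub_distrib,
    Finset.expect_const (hs n)]
  field_simp
  ring

lemma tendsto_variance_div :
    Tendsto (fun n : ℕ ↦ (𝔼 a ∈ s n, X n a ^ 2 - (𝔼 a ∈ s n, X n a) ^ 2) / n) atTop (nhds v) := by
  have := h.sq.sub (h.mean.pow 2)
  rw [zero_pow two_ne_zero, sub_zero] at this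
  refine this.congr fun n ↦ ?_
  have expect_sub : 𝔼 a ∈ s n, (X n a - μ * n) = 𝔼 a ∈ s n, X n a - μ * n := by
    rw [Finset.expect_sub_distrib, Finset.expect_const (hs n)]
  have expect_sub_sq : 𝔼 a ∈ s n, (X n a - μ * n) ^ 2 =
      𝔼 a ∈ s n, X n a ^ 2 - 2 * (μ * n) * 𝔼 a ∈ s n, X n a + (μ * n) ^ 2 := by
    simp_rw [sub_sq, mul_right_comm 2 (X n _)]
    rw [Finset.expect_add_distrib, Finset.expect_sub_distrib, Finset.expect_const (hs n),
      Finset.mul_expect]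
  rw [div_pow, Real.sq_sqrt n.cast_nonneg, ← sub_div, expect_sub, expect_sub_sq]
  congr 1
  ring

lemma tendsto_card_le (hv : 0 < v) (x : ℝ) :
    Tendsto (fun n : ℕ ↦ (Finset.card {a ∈ s n | X n a ≤ μ * n + x * √(v * n)} / (s n).card : ℝ))
      atTop (nhds ((√(2 * Real.pi))⁻¹ * ∫ t in Set.Iic x, Real.exp (-t ^ 2 / 2))) := by
  have := tendsto_card_le_div_card (Z := fun n a ↦ (X n a - μ * n) / √(v * n)) hs (fun t ↦ ?_) x
  · refine this.congr' ((eventually_ge_atTop 1).mono fun n hn ↦ ?_)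
    have hn : (0 : ℝ) < n := by exact_mod_cast hn
    simp only [div_le_iff₀ (Real.sqrt_pos.2 (mul_pos hv hn)), sub_le_iff_le_add']
  · have := h.charFun (t / √v)
    rw [div_pow, Real.sq_sqrt hv.le, mul_div_cancel₀ _ hv.ne'] at this
    refine this.congr fun n ↦ ?_
    simp only [Real.sqrt_mul hv.le, mul_div_assoc', div_mul_eq_mul_div, div_div]

end HasGaussianLimit

/-! ### Łukasiewicz paths -/

section BijOn

variable {α β : Type*} {s : Finset α} {p : β → Prop} {e : α → β}
  (he : Set.BijOn e (s : Set α) {y | p y})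
include he

lemma natCard_subtype_of_bijOn : Nat.card {y // p y} = s.card := by
  let equiv : s ≃ {y // p y} := he.equiv e
  simp [← Nat.card_congr equiv]

lemma natCard_subtype_and_of_bijOn (q : β → Prop) [DecidablePred fun a ↦ q (e a)] :
    Nat.card {y // p y ∧ q y} = Finset.card {a ∈ s | q (e a)} := by
  refine natCard_subtype_of_bijOn (e := e) ?_
  convert he.subset_right (r := {y | p y ∧ q y}) fun _ hy ↦ hy.1 using 1
  ext a
  simpa using fun ha _ ↦ he.mapsTo ha

lemma tsum_div_natCard_of_bijOn (F : β → ℝ) :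
    (∑' y : {y // p y}, F y) / Nat.card {y // p y} = 𝔼 a ∈ s, F (e a) := by
  let equiv : s ≃ {y // p y} := he.equiv e
  rw [natCard_subtype_of_bijOn he, Finset.expect_eq_sum_div_card, ← equiv.tsum_eq]
  exact congrArg (· / _) (Finset.tsum_subtype s fun a ↦ F (e a))

end BijOn

lemma lukaMean_eq_expect (m : ℕ) (ω : ℕ → ℤ) (n : ℕ) :
    lukaMean m ω n = 𝔼 b ∈ dyckWords n, (occCount m ω n (pathSteps b) : ℝ) :=
  tsum_div_natCard_of_bijOn (bijOn_pathSteps n) fun s ↦ (occCount m ω n s : ℝ)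

lemma lukaSqMean_eq_expect (m : ℕ) (ω : ℕ → ℤ) (n : ℕ) :
    lukaSqMean m ω n = 𝔼 b ∈ dyckWords n, (occCount m ω n (pathSteps b) : ℝ) ^ 2 :=
  tsum_div_natCard_of_bijOn (bijOn_pathSteps n) fun s ↦ (occCount m ω n s : ℝ) ^ 2

theorem hasGaussianLimit_occCount {m : ℕ} {ω : ℕ → ℤ} (hω : IsPattern m ω) :
    HasGaussianLimit dyckWords
      (fun n b ↦ occCount m ω n (pathSteps b) - 2 * (𝔼 w, patternIndicator m ω w) * n)
      (2 * autocovariance (centered (patternIndicator m ω))) := by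
  refine ((hasGaussianLimit_sum_window (g := patternIndicator m ω)).of_expect_eq fun n F ↦
    expect_dyckWords fun r b ↦ ?_).of_abs_sub_le (C := m) (fun n b hb ↦ ?_) dyckWords_nonempty
  · rw [sum_window_rotate]
  · rw [sub_sub_sub_cancel_right]
    exact abs_occCount_sub_le hω (mem_dyckWords.1 hb).1

/-- The number of occurrences of a fixed pattern in a uniformly random Łukasiewicz path of
length `n` has asymptotically linear mean and variance, and converges after standardization
to a standard Gaussian distribution. -/
theorem luka_pattern_gaussian (m : ℕ) (hm : 1 ≤ m) (ω : ℕ → ℤ) (hω : IsPattern m ω) :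
    ∃ μ v : ℝ, 0 < μ ∧ 0 < v ∧
      Tendsto (fun n : ℕ => lukaMean m ω n / (n : ℝ)) atTop (nhds μ) ∧
      Tendsto (fun n : ℕ => (lukaSqMean m ω n - lukaMean m ω n ^ 2) / (n : ℝ)) atTop
        (nhds v) ∧
      ∀ x : ℝ,
        Tendsto (fun n : ℕ =>
            (Nat.card {s : ℕ → ℤ // IsLukaSteps n s ∧
                (occCount m ω n s : ℝ) ≤ μ * n + x * Real.sqrt (v * n)} : ℝ) /
              (Nat.card {s : ℕ → ℤ // IsLukaSteps n s} : ℝ))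
          atTop
          (nhds ((Real.sqrt (2 * Real.pi))⁻¹ * ∫ t in Set.Iic x, Real.exp (-t ^ 2 / 2))) := by
  have mean_pos := expect_patternIndicator_pos m ω
  have variance_pos : 0 < 2 * autocovariance (centered (patternIndicator m ω)) :=
    mul_pos two_pos <|
      autocovariance_centered_pos (fun _ ↦ patternIndicator_eq_zero hm hω) mean_pos.ne'
  have limit := hasGaussianLimit_occCount hω
  refine ⟨_, _, mul_pos two_pos mean_pos, variance_pos, ?_, ?_, fun x ↦ ?_⟩
  · simpa only [lukaMean_eq_expect] using limit.tendsto_expect_div dyckWords_nonempty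
  · simpa only [lukaMean_eq_expect, lukaSqMean_eq_expect] using
      limit.tendsto_variance_div dyckWords_nonempty
  · simpa only [natCard_subtype_and_of_bijOn (bijOn_pathSteps _),
      natCard_subtype_of_bijOn (bijOn_pathSteps _)] using
      limit.tendsto_card_le dyckWords_nonempty variance_pos x
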